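/- Let $(M,\langle\,,\,\rangle)$ be a connected, complete, non-compact (smooth) Riemannian manifold of dimension $m\ge 2$. Fix $o\in M$, write $r(x)=\mathrm{dist}(o,x)$ and let $B_R$ be the open geodesic ball of radius $R$ centered at $o$. Let $\Omega\subseteq M$ be a non-empty open set and $X:\Omega\to TM$ a $C^1$ vector field with $|X|\le k$ on $\Omega$ for some constant $k>0$. Let $\mu\in[0,1]$ and $\beta>0$, and let $b\in C(M)$ be a positive function satisfying $$\liminf_{r(x)\to+\infty} r(x)^\mu b(x)\ge\beta \ \text{ if } 0<\mu\le 1,\qquad b(x)\ge\beta \ \text{ for all } x\in M \ \text{ if } \mu=0.$$ Let $\psi\in C^1(\Omega)\cap C(\overline\Omega)$ satisfy $\langle\nabla\psi,X\rangle\ge 0$ on $\Omega$ and, for some $h\in C^1(\Omega)$, $\operatorname{div}_h X\ge b\,\psi$ on $\Omega$, where $\operatorname{div}_h X=\operatorname{div}X-\langle\nabla h,X\rangle$. Put $w=e^{-h}$ and $$c^w_\mu(\Omega)=\liminf_{R\to+\infty}\frac{(1-\mu)\log\int_{B_R\cap\Omega}w}{R^{1-\mu}}\ \text{ if } 0\le\mu<1,\qquad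 c^w_\mu(\Omega)=\liminf_{R\to+\infty}\frac{\log\int_{B_R\cap\Omega}w}{\log R}\ \text{ if } \mu=1,$$ where the integrals are taken with respect to the Riemannian volume, may be infinite, and $\log(+\infty)=+\infty$. Then $$\sup_\Omega\psi\le\max\Big\{\frac{k}{\beta}\,c^w_\mu(\Omega),\ \sup_{\partial\Omega}\psi\Big\}$$ in $[-\infty,+\infty]$, where $\sup_{\partial\Omega}\psi=-\infty$ if $\partial\Omega=\emptyset$. -/

import Mathlib

open MeasureTheory Metric Filter Set Bundle
open scoped Manifold ContDiff ENNReal Topology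

noncomputable section

namespace RiemDrift

/-- The model space `ℝᵐ` with its Euclidean norm. -/
abbrev Euc (m : ℕ) := EuclideanSpace ℝ (Fin m)

section Local

variable {m : ℕ} {M : Type*} [TopologicalSpace M] [ChartedSpace (Euc m) M]

/-- The coordinate vector field `∂ᵢ` of the chart `φ` around `p`, at the point with coordinates `y`:
the image of the `i`-th basis vector under the differential of `φ⁻¹` at `y`. -/
def coordVec (p : M) (i : Fin m) (y : Euc m) :
    TangentSpace (𝓡 m) ((chartAt (Euc m) p).symm y) :=
  mfderiv (𝓡 m) (𝓡 m) (chartAt (Euc m) p).symm y (EuclideanSpace.single i (1 : ℝ) : Euc m)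

/-- The `i`-th component, in the chart `φ` around `p`, of the vector field `X`, at the point with
coordinates `y`: the `i`-th coordinate of `dφ(X)`. -/
def coordComp (p : M) (X : ∀ x : M, TangentSpace (𝓡 m) x) (i : Fin m) (y : Euc m) : ℝ :=
  let v : Euc m := mfderiv (𝓡 m) (𝓡 m) (chartAt (Euc m) p) ((chartAt (Euc m) p).symm y)
    (X ((chartAt (Euc m) p).symm y))
  v i

variable [RiemannianBundle (fun x : M => TangentSpace (𝓡 m) x)]

/-- The matrix `gᵢⱼ = ⟨∂ᵢ, ∂ⱼ⟩` of the metric in the chart around `p`. -/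
def gram (p : M) (y : Euc m) : Matrix (Fin m) (Fin m) ℝ :=
  Matrix.of fun i j => inner ℝ (coordVec p i y) (coordVec p j y)

/-- The volume density `√(det gᵢⱼ)` in the chart around `p`. -/
def volDensity (p : M) (y : Euc m) : ℝ := √(gram p y).det

/-- The Riemannian divergence, in the coordinates of the chart around `x`:
`div X = (1/√g) ∑ᵢ ∂ᵢ(√g Xⁱ)`. -/
def rdiv (X : ∀ x : M, TangentSpace (𝓡 m) x) (x : M) : ℝ :=
  (volDensity x (chartAt (Euc m) x x))⁻¹ *
    ∑ i : Fin m, fderiv ℝ (fun y : Euc m => volDensity x y * coordComp x X i y)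
      (chartAt (Euc m) x x) (EuclideanSpace.single i 1)

/-- The Riemannian gradient of `f` at `x`: the vector representing the differential `df` with
respect to the inner product of the tangent space. -/
def rgrad (f : M → ℝ) (x : M) : TangentSpace (𝓡 m) x :=
  haveI : FiniteDimensional ℝ (TangentSpace (𝓡 m) x) :=
    inferInstanceAs (FiniteDimensional ℝ (Euc m))
  haveI : CompleteSpace (TangentSpace (𝓡 m) x) := FiniteDimensional.complete ℝ _
  (InnerProductSpace.toDual ℝ (TangentSpace (𝓡 m) x)).symm (mfderiv (𝓡 m) 𝓘(ℝ, ℝ) f x)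

/-- The drift divergence `div_h X = div X - ⟨∇h, X⟩`. -/
def driftDiv (h : M → ℝ) (X : ∀ x : M, TangentSpace (𝓡 m) x) (x : M) : ℝ :=
  rdiv X x - inner ℝ (rgrad h x) (X x)

variable (m) in
/-- The Riemannian measure on the domain of the chart `φ` around `p` (extended by zero): the image
under `φ⁻¹` of the measure `√(det gᵢⱼ) dy` on the range of `φ`. -/
def chartVol [MeasurableSpace M] (p : M) : Measure M :=
  ((volume.restrict (chartAt (Euc m) p).target).withDensity
    (fun y => ENNReal.ofReal (volDensity p y))).map (chartAt (Euc m) p).symm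

variable (m M) in
/-- The Riemannian volume measure: the least measure that dominates the Riemannian measures of all
chart domains. As these agree on overlaps, it restricts to each of them on its chart domain. -/
def rvol [MeasurableSpace M] : Measure M := ⨆ p : M, chartVol m p

end Local

section Global

variable {M : Type*} [MetricSpace M]

/-- The weighted parameter `c^w_μ(Ω)` with base point `o`, for the volume measure `vol`. It takes
values in the extended reals; the integral of the positive weight `w` may be infinite, and then its
logarithm is `+∞`. -/
def cw [MeasurableSpace M] (vol : Measure M) (o : M) (μ : ℝ) (w : M → ℝ) (Ω : Set M) : EReal :=
  if μ = 1 then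
    liminf (fun R : ℝ =>
      ENNReal.log (∫⁻ x in ball o R ∩ Ω, ENNReal.ofReal (w x) ∂vol) / ((Real.log R : ℝ) : EReal))
      atTop
  else
    liminf (fun R : ℝ =>
      ((1 - μ : ℝ) : EReal) * ENNReal.log (∫⁻ x in ball o R ∩ Ω, ENNReal.ofReal (w x) ∂vol) /
        ((R ^ (1 - μ) : ℝ) : EReal))
      atTop

/-- Condition (B) for the parameters `μ` and `β`, with `r(x) = dist o x`. -/
def CondB (o : M) (μ β : ℝ) (b : M → ℝ) : Prop :=
  if μ = 0 then ∀ x, β ≤ b x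
  else (β : EReal) ≤
    liminf (fun x => ((dist o x ^ μ * b x : ℝ) : EReal)) (comap (fun x => dist o x) atTop)

end Global

end RiemDrift

end

/-!
Let `ρ` be the weight `e^{-h}` truncated smoothly to `{ψ > γ}`, where `γ > 0` exceeds the boundary
values of `ψ`. Differentiating the truncation contributes a multiple of `⟨∇ψ, X⟩ ≥ 0`, so
`div (ρ X) ≥ γ b ρ`. Testing this against a radial cutoff of slope `1 / ε` bounds
`ε γ ∫_{B_R} b ρ` by `k` times the mass of `ρ` in the shell `B_{R+ε} ∖ B_R`. Since `b` is almost
at least `β r^{-μ}` at infinity, letting `ε → 0` forces the mass of `ρ` in `B_R` to grow at least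
like the exponential of `γ β / k` times the primitive of `R^{-μ}`, unless `ψ ≤ γ` on `Ω`. Hence
`γ β / k ≤ c^w_μ(Ω)` for every such `γ` below `sup ψ`.

The cutoff is merely Lipschitz, so the divergence theorem is needed for locally Lipschitz test
functions; in a chart it follows from Rademacher's theorem.
-/

noncomputable section

namespace RiemDrift

section LengthSpace

variable {M : Type*} [MetricSpace M] {o : M}

/-- Every point at distance less than `r + δ` from `o` lies within `δ` of the closed ball of radius
`r` around `o`: the only property of length metrics that the Hopf–Rinow theorem needs. -/
def HasApproxIntermediatePoints (o : M) : Prop :=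
  ∀ ⦃x : M⦄ ⦃r δ : ℝ⦄, 0 ≤ r → 0 < δ → dist o x < r + δ → ∃ z, dist o z ≤ r ∧ dist z x < δ

lemma HasApproxIntermediatePoints.isCompact_closedBall_of_forall_lt [CompleteSpace M]
    (ho : HasApproxIntermediatePoints o) {r : ℝ} (hr : 0 < r)
    (h : ∀ s < r, IsCompact (closedBall o s)) : IsCompact (closedBall o r) := by
  refine TotallyBounded.isCompact_of_isClosed (Metric.totallyBounded_iff.2 fun ε hε => ?_)
    isClosed_closedBall
  have hs : max 0 (r - ε / 4) < r := max_lt hr (by linarith)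
  obtain ⟨t, -, htf, ht⟩ := (h _ hs).finite_cover_balls (half_pos hε)
  refine ⟨t, htf, fun x hx => ?_⟩
  have hx' : dist o x < max 0 (r - ε / 4) + ε / 2 := by
    rw [mem_closedBall'] at hx
    linarith [le_max_right 0 (r - ε / 4)]
  obtain ⟨z, hz, hzx⟩ := ho (le_max_left _ _) (half_pos hε) hx'
  obtain ⟨y, hy, hzy⟩ := mem_iUnion₂.1 (ht (mem_closedBall'.2 hz))
  refine mem_iUnion₂.2 ⟨y, hy, ?_⟩
  rw [mem_ball] at hzy ⊢
  linarith [dist_triangle x z y, dist_comm x z]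

lemma HasApproxIntermediatePoints.exists_gt_isCompact_closedBall [LocallyCompactSpace M]
    (ho : HasApproxIntermediatePoints o) {r : ℝ} (hr : 0 ≤ r) (h : IsCompact (closedBall o r)) :
    ∃ s > r, IsCompact (closedBall o s) := by
  obtain ⟨δ, hδ, hδc⟩ := h.exists_isCompact_cthickening
  refine ⟨r + δ / 2, by linarith, hδc.of_isClosed_subset isClosed_closedBall fun x hx => ?_⟩
  rw [mem_closedBall'] at hx
  obtain ⟨z, hz, hzx⟩ := ho hr hδ (by linarith : dist o x < r + δ)
  exact thickening_subset_cthickening _ _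
    (mem_thickening_iff.2 ⟨z, mem_closedBall'.2 hz, by rwa [dist_comm]⟩)

theorem HasApproxIntermediatePoints.isCompact_closedBall [LocallyCompactSpace M] [CompleteSpace M]
    (ho : HasApproxIntermediatePoints o) (r : ℝ) : IsCompact (closedBall o r) := by
  by_contra hr
  set S : Set ℝ := {r | ¬ IsCompact (closedBall o r)}
  have hS : ∀ s ∈ S, 0 ≤ s := fun s hs => by
    by_contra! hneg
    exact hs (by simp [closedBall_eq_empty.2 hneg])
  have hSne : S.Nonempty := ⟨r, hr⟩
  have hlt : ∀ s < sInf S, IsCompact (closedBall o s) := fun s hs =>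
    not_not.1 fun hns => hs.not_ge (csInf_le ⟨0, hS⟩ hns)
  have hinf : IsCompact (closedBall o (sInf S)) := by
    rcases (le_csInf hSne hS).eq_or_lt with h0 | hpos
    · simp [← h0]
    · exact ho.isCompact_closedBall_of_forall_lt hpos hlt
  obtain ⟨s, hs, hsc⟩ := ho.exists_gt_isCompact_closedBall (le_csInf hSne hS) hinf
  obtain ⟨t, htS, hts⟩ := exists_lt_of_csInf_lt hSne hs
  exact htS (hsc.of_isClosed_subset isClosed_closedBall (closedBall_subset_closedBall hts.le))

end LengthSpace

section LocallyLipschitz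

lemma locallyLipschitzOn_comp {α β γ : Type*} [PseudoEMetricSpace α]
    [PseudoEMetricSpace β] [PseudoEMetricSpace γ] {g : β → γ} {f : α → β} {t : Set β} {s : Set α}
    (hg : LocallyLipschitzOn t g) (hf : LocallyLipschitzOn s f) (h : MapsTo f s t) :
    LocallyLipschitzOn s (g ∘ f) := by
  intro x hx
  obtain ⟨K, v, hv, hK⟩ := hf hx
  obtain ⟨L, u, hu, hL⟩ := hg (h hx)
  exact ⟨L * K, v ∩ f ⁻¹' u, inter_mem hv ((hf.continuousOn x hx).tendsto_nhdsWithin h hu),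
    hL.comp (hK.mono inter_subset_left) fun z hz => hz.2⟩

variable {E F : Type*} [NormedAddCommGroup E] [NormedSpace ℝ E] [NormedAddCommGroup F]
  [NormedSpace ℝ F]

lemma locallyLipschitzOn_of_contDiffOn {f : E → F} {U : Set E} (hU : IsOpen U)
    (hf : ContDiffOn ℝ 1 f U) : LocallyLipschitzOn U f := fun _ hx =>
  let ⟨K, t, ht, hK⟩ := (hf.contDiffAt (hU.mem_nhds hx)).exists_lipschitzOnWith
  ⟨K, t, mem_nhdsWithin_of_mem_nhds ht, hK⟩

lemma locallyLipschitzOn_mul {α : Type*} [PseudoEMetricSpace α] {f g : α → ℝ} {s : Set α}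
    (hf : LocallyLipschitzOn s f) (hg : LocallyLipschitzOn s g) :
    LocallyLipschitzOn s (fun x => f x * g x) := by
  have hmul : LocallyLipschitzOn univ fun p : ℝ × ℝ => p.1 * p.2 :=
    locallyLipschitzOn_of_contDiffOn isOpen_univ (by fun_prop)
  have hprod : LocallyLipschitzOn s fun x => (f x, g x) := fun x hx =>
    let ⟨K, t, ht, hK⟩ := hf hx
    let ⟨L, u, hu, hL⟩ := hg hx
    ⟨max K L, t ∩ u, inter_mem ht hu,
      (hK.mono inter_subset_left).prodMk (hL.mono inter_subset_right)⟩
  exact locallyLipschitzOn_comp hmul hprod (mapsTo_univ _ _)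

lemma locallyLipschitz_of_tsupport_subset {α : Type*} [PseudoMetricSpace α] {f : α → ℝ}
    {U : Set α} (hU : IsOpen U) (hf : LocallyLipschitzOn U f) (hs : tsupport f ⊆ U) :
    LocallyLipschitz f := by
  intro x
  by_cases hx : x ∈ tsupport f
  · obtain ⟨K, t, ht, hK⟩ := hf (hs hx)
    exact ⟨K, t, by rwa [hU.nhdsWithin_eq (hs hx)] at ht, hK⟩
  · refine ⟨0, (tsupport f)ᶜ, (isClosed_tsupport f).isOpen_compl.mem_nhds hx, fun a ha b hb => ?_⟩
    simp [image_eq_zero_of_notMem_tsupport ha, image_eq_zero_of_notMem_tsupport hb]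

-- A point of the support and a point outside the compact `δ`-thickening are `δ` apart.
lemma exists_lipschitzWith_of_hasCompactSupport {α : Type*} [PseudoMetricSpace α]
    [LocallyCompactSpace α] {f : α → ℝ} (hf : LocallyLipschitz f) (hc : HasCompactSupport f) :
    ∃ C, LipschitzWith C f := by
  obtain ⟨δ, hδ, hδc⟩ := hc.isCompact.exists_isCompact_cthickening
  obtain ⟨K, hK⟩ := hf.locallyLipschitzOn.exists_lipschitzOnWith_of_compact hδc
  obtain ⟨B, hB⟩ := hc.exists_bound_of_continuous hf.continuous
  refine ⟨K + Real.toNNReal (B / δ), LipschitzWith.of_dist_le_mul fun a b => ?_⟩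
  rw [NNReal.coe_add]
  wlog ha : a ∈ tsupport f generalizing a b
  · by_cases hb : b ∈ tsupport f
    · simpa only [dist_comm] using this b a hb
    · rw [image_eq_zero_of_notMem_tsupport ha, image_eq_zero_of_notMem_tsupport hb, dist_self]
      positivity
  by_cases hb : b ∈ cthickening δ (tsupport f)
  · calc dist (f a) (f b) ≤ K * dist a b := hK.dist_le_mul a (self_subset_cthickening _ ha) b hb
      _ ≤ _ := by gcongr; simp
  · have hab : δ ≤ dist a b := by
      by_contra! hlt
      exact hb (thickening_subset_cthickening _ _
        (mem_thickening_iff.2 ⟨a, ha, by rwa [dist_comm]⟩))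
    have hfb : f b = 0 :=
      image_eq_zero_of_notMem_tsupport fun h => hb (self_subset_cthickening _ h)
    calc dist (f a) (f b) ≤ B := by simpa [hfb] using hB a
      _ = B / δ * δ := by field_simp
      _ ≤ (K + Real.toNNReal (B / δ)) * dist a b := by
        gcongr
        exact (Real.le_coe_toNNReal _).trans (by simp)

end LocallyLipschitz

section Rademacher

variable {E : Type*} [NormedAddCommGroup E] [NormedSpace ℝ E] [FiniteDimensional ℝ E]
  [MeasurableSpace E] [BorelSpace E] (ν : Measure E) [ν.IsAddHaarMeasure] {f : E → ℝ}

lemma ae_differentiableAt_of_locallyLipschitzOn {U : Set E} (hU : IsOpen U)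
    (hf : LocallyLipschitzOn U f) : ∀ᵐ y ∂(ν.restrict U), DifferentiableAt ℝ f y := by
  rw [ae_restrict_iff' hU.measurableSet, ae_iff]
  refine measure_null_of_locally_null _ fun x hx => ?_
  simp only [Classical.not_imp, mem_ofPred_eq] at hx
  obtain ⟨K, t, ht, hK⟩ := hf hx.1
  rw [hU.nhdsWithin_eq hx.1] at ht
  obtain ⟨V, hVt, hV, hxV⟩ := _root_.mem_nhds_iff.1 ht
  refine ⟨_, inter_mem_nhdsWithin _ (hV.mem_nhds hxV), measure_mono_null ?_
    (ae_iff.1 ((hK.mono hVt).ae_differentiableWithinAt_of_mem (μ := ν)))⟩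
  rintro z ⟨hz, hzV⟩ h
  exact hz fun _ => (h hzV).differentiableAt (hV.mem_nhds hzV)

lemma integrable_fderiv_of_locallyLipschitz (hf : LocallyLipschitz f) (hc : HasCompactSupport f)
    (v : E) : Integrable (fun y => fderiv ℝ f y v) ν := by
  obtain ⟨C, hC⟩ := exists_lipschitzWith_of_hasCompactSupport hf hc
  have hbound : ∀ y, ‖fderiv ℝ f y v‖ ≤ C * ‖v‖ := fun y =>
    (fderiv ℝ f y).le_of_opNorm_le (norm_fderiv_le_of_lipschitz ℝ hC) v
  have hint : IntegrableOn (fun y => fderiv ℝ f y v) (tsupport f) ν :=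
    Measure.integrableOn_of_bounded hc.isCompact.measure_lt_top.ne
      (measurable_fderiv_apply_const ℝ f v).aestronglyMeasurable (.of_forall hbound)
  refine (integrableOn_iff_integrable_of_support_subset fun y hy => ?_).1 hint
  by_contra h
  simp [fderiv_of_notMem_tsupport ℝ h] at hy

lemma integral_fderiv_eq_zero_of_locallyLipschitz (hf : LocallyLipschitz f)
    (hc : HasCompactSupport f) (v : E) : ∫ y, fderiv ℝ f y v ∂ν = 0 := by
  obtain ⟨C, hC⟩ := exists_lipschitzWith_of_hasCompactSupport hf hc
  have hline : ∫ y, lineDeriv ℝ f y v ∂ν = 0 := by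
    have h := (LipschitzWith.const (1 : ℝ) (α := E)).integral_lineDeriv_mul_eq (μ := ν) hC hc (-v)
    simpa [lineDeriv] using h.symm
  rw [← hline]
  refine integral_congr_ae ?_
  filter_upwards [hC.ae_differentiableAt] with y hy
  exact hy.lineDeriv_eq_fderiv.symm

end Rademacher

section PathLength

variable {E H M : Type*} [NormedAddCommGroup E] [NormedSpace ℝ E] [TopologicalSpace H]
  {I : ModelWithCorners ℝ E H} [MetricSpace M] [ChartedSpace H M]
  [RiemannianBundle (fun x : M => TangentSpace I x)] [IsRiemannianManifold I M]

lemma dist_le_of_norm_mfderiv_le {γ : ℝ → M} {c : ℝ} (hγ : ContMDiffOn 𝓘(ℝ, ℝ) I 1 γ (Icc 0 1))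
    (h : ∀ t ∈ Icc (0 : ℝ) 1, ‖mfderiv 𝓘(ℝ, ℝ) I γ t 1‖ ≤ c) : dist (γ 0) (γ 1) ≤ c := by
  have hc : 0 ≤ c := (norm_nonneg _).trans (h 0 (by simp))
  rw [← ENNReal.ofReal_le_ofReal_iff hc, ← edist_dist, IsRiemannianManifold.out (I := I)]
  calc Manifold.riemannianEDist I (γ 0) (γ 1)
      ≤ Manifold.pathELength I γ 0 1 :=
        Manifold.riemannianEDist_le_pathELength hγ rfl rfl zero_le_one
    _ = ∫⁻ t in Icc (0 : ℝ) 1, ‖mfderiv 𝓘(ℝ, ℝ) I γ t 1‖ₑ :=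
        Manifold.pathELength_eq_lintegral_mfderiv_Icc
    _ ≤ ∫⁻ _ in Icc (0 : ℝ) 1, ENNReal.ofReal c :=
        setLIntegral_mono' measurableSet_Icc fun t ht => by
          rw [← ofReal_norm]
          exact ENNReal.ofReal_le_ofReal (h t ht)
    _ = ENNReal.ofReal c := by simp

end PathLength

section HopfRinow

lemma hasApproxIntermediatePoints_of_isRiemannianManifold {E H M : Type*} [NormedAddCommGroup E]
    [NormedSpace ℝ E] [TopologicalSpace H] (I : ModelWithCorners ℝ E H) [MetricSpace M]
    [ChartedSpace H M] [RiemannianBundle (fun x : M => TangentSpace I x)]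
    [IsRiemannianManifold I M] (o : M) : HasApproxIntermediatePoints o := by
  intro x r δ hr hδ h
  by_cases hx : dist o x ≤ r
  · exact ⟨x, hx, by simpa using hδ⟩
  have hlt : Manifold.riemannianEDist I o x < ENNReal.ofReal (r + δ) := by
    rw [← IsRiemannianManifold.out (I := I), edist_dist]
    exact (ENNReal.ofReal_lt_ofReal_iff (by linarith)).2 h
  obtain ⟨γ, h0, h1, hγ, hlen⟩ := Manifold.exists_lt_of_riemannianEDist_lt hlt
  obtain ⟨t, ht, htr : dist o (γ t) = r⟩ : r ∈ (fun t => dist o (γ t)) '' Icc 0 1 :=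
    intermediate_value_Icc zero_le_one
      ((continuous_const.dist continuous_id).comp_continuousOn hγ.continuousOn)
      ⟨by simpa [h0] using hr, by simpa [h1] using (not_le.1 hx).le⟩
  have hleft : edist o (γ t) ≤ Manifold.pathELength I γ 0 t := by
    rw [IsRiemannianManifold.out (I := I)]
    exact Manifold.riemannianEDist_le_pathELength (hγ.mono (Icc_subset_Icc_right ht.2)) h0 rfl ht.1
  have hright : edist (γ t) x ≤ Manifold.pathELength I γ t 1 := by
    rw [IsRiemannianManifold.out (I := I)]
    exact Manifold.riemannianEDist_le_pathELength (hγ.mono (Icc_subset_Icc_left ht.1)) rfl h1 ht.2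
  have hsum := (add_le_add hleft hright).trans_lt
    ((Manifold.pathELength_add ht.1 ht.2).trans_lt hlen)
  rw [edist_dist, edist_dist, htr, ← ENNReal.ofReal_add hr dist_nonneg,
    ENNReal.ofReal_lt_ofReal_iff (by linarith)] at hsum
  exact ⟨γ t, htr.le, by linarith⟩

theorem properSpace_of_isRiemannianManifold {E H M : Type*} [NormedAddCommGroup E]
    [NormedSpace ℝ E] [TopologicalSpace H] [LocallyCompactSpace H] (I : ModelWithCorners ℝ E H)
    [MetricSpace M] [CompleteSpace M] [ChartedSpace H M]
    [RiemannianBundle (fun x : M => TangentSpace I x)] [IsRiemannianManifold I M] :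
    ProperSpace M :=
  have : LocallyCompactSpace M := ChartedSpace.locallyCompactSpace H M
  ⟨fun o => (hasApproxIntermediatePoints_of_isRiemannianManifold I o).isCompact_closedBall⟩

end HopfRinow

section ChartCalculus

variable {m : ℕ} {M : Type*} [TopologicalSpace M] [ChartedSpace (Euc m) M]

/-- The differential of the inverse of the chart around `p`, with both tangent spaces read as
`ℝᵐ`. -/
def symmDeriv (p : M) (y : Euc m) : Euc m →L[ℝ] Euc m :=
  mfderiv (𝓡 m) (𝓡 m) (chartAt (Euc m) p).symm y

/-- The differential of the chart around `p`, with both tangent spaces read as `ℝᵐ`. -/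
def chartDeriv (p x : M) : Euc m →L[ℝ] Euc m :=
  mfderiv (𝓡 m) (𝓡 m) (chartAt (Euc m) p) x

/-- The differential of the function `f`, as a linear form on the tangent space read as `ℝᵐ`. -/
def differential (f : M → ℝ) (x : M) : Euc m →L[ℝ] ℝ := mfderiv (𝓡 m) 𝓘(ℝ, ℝ) f x

/-- The change of coordinates from the chart around `p` to the chart around `q`. -/
def transition (m : ℕ) {M : Type*} [TopologicalSpace M] [ChartedSpace (Euc m) M] (p q : M) :
    Euc m → Euc m :=
  chartAt (Euc m) q ∘ (chartAt (Euc m) p).symm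

/-- The vector field `X` is continuously differentiable on `Ω`. -/
abbrev IsC1FieldOn [IsManifold (𝓡 m) ∞ M] (X : ∀ x : M, TangentSpace (𝓡 m) x)
    (Ω : Set M) : Prop :=
  ContMDiffOn (𝓡 m) (𝓡 m).tangent 1 (fun x => (⟨x, X x⟩ : TangentBundle (𝓡 m) M)) Ω

variable [IsManifold (𝓡 m) ∞ M] {p q x : M} {y : Euc m} {f : M → ℝ} {Ω : Set M}
  {X : ∀ x : M, TangentSpace (𝓡 m) x}

lemma chartDeriv_symmDeriv (hy : y ∈ (chartAt (Euc m) p).target) (v : Euc m) :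
    chartDeriv p ((chartAt (Euc m) p).symm y) (symmDeriv p y v) = v :=
  congrArg (fun L => L v) ((mdifferentiable_chart (I := 𝓡 m) p).comp_symm_deriv hy)

lemma symmDeriv_chartDeriv (hx : x ∈ (chartAt (Euc m) p).source) (v : Euc m) :
    symmDeriv p (chartAt (Euc m) p x) (chartDeriv p x v) = v :=
  congrArg (fun L => L v) ((mdifferentiable_chart (I := 𝓡 m) p).symm_comp_deriv hx)

lemma symmDeriv_injective (hy : y ∈ (chartAt (Euc m) p).target) :
    Function.Injective (symmDeriv p y) :=
  Function.LeftInverse.injective (chartDeriv_symmDeriv hy)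

lemma hasFDerivAt_transition (hy : y ∈ (chartAt (Euc m) p).target)
    (hq : (chartAt (Euc m) p).symm y ∈ (chartAt (Euc m) q).source) :
    HasFDerivAt (transition m p q)
      ((chartDeriv q ((chartAt (Euc m) p).symm y)).comp (symmDeriv p y)) y :=
  (((mdifferentiable_chart (I := 𝓡 m) q).mdifferentiableAt hq).hasMFDerivAt.comp y
    ((mdifferentiable_chart (I := 𝓡 m) p).mdifferentiableAt_symm hy).hasMFDerivAt).hasFDerivAt

lemma symmDeriv_transition_comp_fderiv (hy : y ∈ (chartAt (Euc m) p).target)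
    (hq : (chartAt (Euc m) p).symm y ∈ (chartAt (Euc m) q).source) :
    (symmDeriv q (transition m p q y)).comp (fderiv ℝ (transition m p q) y) = symmDeriv p y := by
  ext1 v
  rw [(hasFDerivAt_transition hy hq).fderiv]
  exact symmDeriv_chartDeriv hq _

lemma hasFDerivAt_comp_chart_symm (hx : x ∈ (chartAt (Euc m) p).source)
    (hf : MDifferentiableAt (𝓡 m) 𝓘(ℝ, ℝ) f x) :
    HasFDerivAt (f ∘ (chartAt (Euc m) p).symm)
      ((differential f x).comp (symmDeriv p (chartAt (Euc m) p x))) (chartAt (Euc m) p x) := by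
  have hf' : HasMFDerivAt (𝓡 m) 𝓘(ℝ, ℝ) f ((chartAt (Euc m) p).symm (chartAt (Euc m) p x))
      (differential f x) := by
    rw [(chartAt (Euc m) p).left_inv hx]
    exact hf.hasMFDerivAt
  exact (hf'.comp (chartAt (Euc m) p x) ((mdifferentiable_chart (I := 𝓡 m) p).mdifferentiableAt_symm
    ((chartAt (Euc m) p).map_source hx)).hasMFDerivAt).hasFDerivAt

lemma mdifferentiableAt_of_comp_chart_symm (hx : x ∈ (chartAt (Euc m) p).source)
    (hf : DifferentiableAt ℝ (f ∘ (chartAt (Euc m) p).symm) (chartAt (Euc m) p x)) :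
    MDifferentiableAt (𝓡 m) 𝓘(ℝ, ℝ) f x := by
  refine (MDifferentiableAt.comp x hf.mdifferentiableAt
    ((mdifferentiable_chart (I := 𝓡 m) p).mdifferentiableAt hx)).congr_of_eventuallyEq ?_
  filter_upwards [(chartAt (Euc m) p).open_source.mem_nhds hx] with z hz
  simp [(chartAt (Euc m) p).left_inv hz]

lemma contDiffOn_comp_chart_symm (hf : ContMDiffOn (𝓡 m) 𝓘(ℝ, ℝ) 1 f Ω) (p : M) :
    ContDiffOn ℝ 1 (f ∘ (chartAt (Euc m) p).symm)
      ((chartAt (Euc m) p).target ∩ (chartAt (Euc m) p).symm ⁻¹' Ω) := by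
  rw [← contMDiffOn_iff_contDiffOn]
  have hsymm : ContMDiffOn (𝓡 m) (𝓡 m) 1 (chartAt (Euc m) p).symm (chartAt (Euc m) p).target :=
    (contMDiffOn_chart_symm (n := ∞)).of_le (by norm_cast)
  exact hf.comp (hsymm.mono inter_subset_left) fun y hy => hy.2

lemma contMDiffOn_symmDeriv (p : M) (v : Euc m) :
    ContMDiffOn (𝓡 m) (𝓡 m).tangent 1
      (fun y => (⟨(chartAt (Euc m) p).symm y, symmDeriv p y v⟩ : TangentBundle (𝓡 m) M))
      (chartAt (Euc m) p).target := by
  have hsymm : ContMDiffOn (𝓡 m) (𝓡 m) 2 (chartAt (Euc m) p).symm (chartAt (Euc m) p).target :=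
    (contMDiffOn_chart_symm (n := ∞)).of_le (by norm_cast)
  have hconst : ContMDiff (𝓡 m) (𝓡 m).tangent 1
      (fun y : Euc m => (⟨y, v⟩ : TangentBundle (𝓡 m) (Euc m))) :=
    contMDiff_vectorSpace_iff_contDiff.2 contDiff_const
  refine ((hsymm.contMDiffOn_tangentMapWithin (m := 1) (by norm_num)
    (chartAt (Euc m) p).open_target.uniqueMDiffOn).comp hconst.contMDiffOn
      (s := (chartAt (Euc m) p).target) fun y hy => hy).congr fun y hy => ?_
  simp only [Function.comp, tangentMapWithin, symmDeriv]
  rw [mfderivWithin_of_isOpen (chartAt (Euc m) p).open_target hy]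
  rfl

lemma contDiffOn_coordComp (hX : IsC1FieldOn X Ω) (p : M) (i : Fin m) :
    ContDiffOn ℝ 1 (coordComp p X i)
      ((chartAt (Euc m) p).target ∩ (chartAt (Euc m) p).symm ⁻¹' Ω) := by
  have hchart : ContMDiffOn (𝓡 m) (𝓡 m) 2 (chartAt (Euc m) p) (chartAt (Euc m) p).source :=
    (contMDiffOn_chart (n := ∞)).of_le (by norm_cast)
  have hsymm : ContMDiffOn (𝓡 m) (𝓡 m) 1 (chartAt (Euc m) p).symm (chartAt (Euc m) p).target :=
    (contMDiffOn_chart_symm (n := ∞)).of_le (by norm_cast)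
  have hpull := hX.comp (hsymm.mono inter_subset_left)
    (s := (chartAt (Euc m) p).target ∩ (chartAt (Euc m) p).symm ⁻¹' Ω) fun y hy => hy.2
  have hpush := (hchart.contMDiffOn_tangentMapWithin (m := 1) (by norm_num)
    (chartAt (Euc m) p).open_source.uniqueMDiffOn).comp hpull
      fun y hy => (chartAt (Euc m) p).map_target hy.1
  have hcoord : ContDiffOn ℝ 1
      (fun y => chartDeriv p ((chartAt (Euc m) p).symm y) (X ((chartAt (Euc m) p).symm y)))
      ((chartAt (Euc m) p).target ∩ (chartAt (Euc m) p).symm ⁻¹' Ω) := by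
    refine contMDiffOn_vectorSpace_iff_contDiffOn.1 (hpush.congr fun y hy => ?_)
    simp only [Function.comp, tangentMapWithin, chartDeriv]
    rw [mfderivWithin_of_isOpen (chartAt (Euc m) p).open_source
      ((chartAt (Euc m) p).map_target hy.1), (chartAt (Euc m) p).right_inv hy.1]
    rfl
  exact contDiffOn_euclidean.1 hcoord i

end ChartCalculus

lemma det_toMatrix_comp_self {R V ι : Type*} [CommRing R] [AddCommGroup V] [Module R V]
    [Fintype ι] [DecidableEq ι] (b : Module.Basis ι R V) (B : LinearMap.BilinForm R V)
    (L : V →ₗ[R] V) :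
    (LinearMap.BilinForm.toMatrix b (B.comp L L)).det =
      LinearMap.det L ^ 2 * (LinearMap.BilinForm.toMatrix b B).det := by
  rw [LinearMap.BilinForm.toMatrix_comp b b, Matrix.det_mul, Matrix.det_mul,
    Matrix.det_transpose, LinearMap.det_toMatrix]
  ring

section Density

variable {m : ℕ} {M : Type*} [TopologicalSpace M] [ChartedSpace (Euc m) M]
  [RiemannianBundle (fun x : M => TangentSpace (𝓡 m) x)] {p q : M} {y : Euc m}

/-- The Riemannian metric at `x`, as a bilinear form on the tangent space read as `ℝᵐ`. -/
def metricForm (x : M) : LinearMap.BilinForm ℝ (Euc m) := innerₗ (TangentSpace (𝓡 m) x)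

lemma gram_eq_toMatrix (p : M) (y : Euc m) :
    gram p y = LinearMap.BilinForm.toMatrix (EuclideanSpace.basisFun (Fin m) ℝ).toBasis
      ((metricForm ((chartAt (Euc m) p).symm y)).comp (symmDeriv p y).toLinearMap
        (symmDeriv p y).toLinearMap) := by
  ext i j
  simp only [LinearMap.BilinForm.toMatrix_apply, OrthonormalBasis.coe_toBasis,
    EuclideanSpace.basisFun_apply]
  rfl

variable [IsManifold (𝓡 m) ∞ M]

lemma gram_det_pos (hy : y ∈ (chartAt (Euc m) p).target) : 0 < (gram p y).det := by
  have hindep : LinearIndependent ℝ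
      (fun i => symmDeriv p y (EuclideanSpace.single i (1 : ℝ))) := by
    simpa [Function.comp_def] using
      (EuclideanSpace.basisFun (Fin m) ℝ).toBasis.linearIndependent.map'
        (symmDeriv p y).toLinearMap (LinearMap.ker_eq_bot.2 (symmDeriv_injective hy))
  have hpos : (Matrix.gram ℝ (fun i => coordVec p i y)).PosDef :=
    Matrix.posDef_gram_of_linearIndependent
      (E := TangentSpace (𝓡 m) ((chartAt (Euc m) p).symm y)) hindep
  exact hpos.det_pos

lemma volDensity_pos (hy : y ∈ (chartAt (Euc m) p).target) : 0 < volDensity p y :=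
  Real.sqrt_pos.2 (gram_det_pos hy)

lemma gram_det_transition (hy : y ∈ (chartAt (Euc m) p).target)
    (hq : (chartAt (Euc m) p).symm y ∈ (chartAt (Euc m) q).source) :
    (gram p y).det =
      (fderiv ℝ (transition m p q) y).det ^ 2 * (gram q (transition m p q y)).det := by
  have hsymm : (chartAt (Euc m) q).symm (transition m p q y) = (chartAt (Euc m) p).symm y :=
    (chartAt (Euc m) q).left_inv hq
  rw [gram_eq_toMatrix p, gram_eq_toMatrix q, hsymm, ← symmDeriv_transition_comp_fderiv hy hq,
    ContinuousLinearMap.toLinearMap_comp, ← LinearMap.BilinForm.comp_comp]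
  exact det_toMatrix_comp_self _ _ _

lemma volDensity_transition (hy : y ∈ (chartAt (Euc m) p).target)
    (hq : (chartAt (Euc m) p).symm y ∈ (chartAt (Euc m) q).source) :
    volDensity p y =
      |(fderiv ℝ (transition m p q) y).det| * volDensity q (transition m p q y) := by
  rw [volDensity, gram_det_transition hy hq, Real.sqrt_mul (sq_nonneg _), Real.sqrt_sq_eq_abs,
    volDensity]

variable [IsContMDiffRiemannianBundle (𝓡 m) ∞ (Euc m) (fun x : M => TangentSpace (𝓡 m) x)]

lemma contDiffOn_inner_symmDeriv (p : M) (u v : Euc m) :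
    ContDiffOn ℝ 1 (fun y => metricForm ((chartAt (Euc m) p).symm y)
      (symmDeriv p y u) (symmDeriv p y v)) (chartAt (Euc m) p).target := by
  have : IsContMDiffRiemannianBundle (𝓡 m) 1 (Euc m) (fun x : M => TangentSpace (𝓡 m) x) :=
    IsContMDiffRiemannianBundle.of_le (n := ∞) (by norm_cast)
  exact contMDiffOn_iff_contDiffOn.1
    ((contMDiffOn_symmDeriv p u).inner_bundle (contMDiffOn_symmDeriv p v))

lemma contDiffOn_volDensity (p : M) :
    ContDiffOn ℝ 1 (volDensity p) (chartAt (Euc m) p).target := by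
  have hdet : ContDiffOn ℝ 1 (fun y => (gram p y).det) (chartAt (Euc m) p).target := by
    simp only [Matrix.det_apply]
    exact ContDiffOn.sum fun σ _ => ContDiffOn.const_smul _ <|
      contDiffOn_prod fun i _ => contDiffOn_inner_symmDeriv p _ _
  exact hdet.sqrt fun y hy => (gram_det_pos hy).ne'

end Density

section MapSymm

variable {α β : Type*} [TopologicalSpace α] [TopologicalSpace β] [MeasurableSpace α]
  [BorelSpace α] [MeasurableSpace β] [BorelSpace β] (e : OpenPartialHomeomorph α β)

lemma measurableEmbedding_domRestrict_symm :
    MeasurableEmbedding (e.target.domRestrict e.symm) :=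
  e.symm.isOpenEmbedding_restrict.measurableEmbedding

lemma measurableSet_target_inter_preimage_symm {s : Set α} (hs : MeasurableSet s) :
    MeasurableSet (e.target ∩ e.symm ⁻¹' s) := by
  rw [← Subtype.image_preimage_coe]
  exact e.open_target.measurableSet.subtype_image
    ((measurableEmbedding_domRestrict_symm e).measurable hs)

variable (ν : Measure β)

lemma map_symm_restrict_target :
    (ν.restrict e.target).map e.symm =
      (ν.comap ((↑) : e.target → β)).map (e.target.domRestrict e.symm) := by
  have hval : (ν.comap ((↑) : e.target → β)).map (↑) = ν.restrict e.target :=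
    map_comap_subtype_coe e.open_target.measurableSet ν
  have hsymm : AEMeasurable e.symm ((ν.comap ((↑) : e.target → β)).map (↑)) :=
    hval ▸ e.symm.continuousOn.aemeasurable e.open_target.measurableSet
  rw [← hval, AEMeasurable.map_map_of_aemeasurable hsymm measurable_subtype_coe.aemeasurable]
  rfl

lemma ae_map_symm_restrict_target_iff {P : α → Prop} :
    (∀ᵐ x ∂(ν.restrict e.target).map e.symm, P x) ↔
      ∀ᵐ y ∂ν.restrict e.target, P (e.symm y) := by
  rw [map_symm_restrict_target, (measurableEmbedding_domRestrict_symm e).ae_map_iff,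
    ← map_comap_subtype_coe e.open_target.measurableSet,
    (MeasurableEmbedding.subtype_coe e.open_target.measurableSet).ae_map_iff]
  rfl

lemma integral_map_symm_restrict_target {E : Type*} [NormedAddCommGroup E] [NormedSpace ℝ E]
    (F : α → E) :
    ∫ x, F x ∂(ν.restrict e.target).map e.symm = ∫ y in e.target, F (e.symm y) ∂ν := by
  rw [map_symm_restrict_target, (measurableEmbedding_domRestrict_symm e).integral_map,
    ← map_comap_subtype_coe e.open_target.measurableSet,
    (MeasurableEmbedding.subtype_coe e.open_target.measurableSet).integral_map]
  rfl

lemma integrable_map_symm_restrict_target_iff {E : Type*} [NormedAddCommGroup E] (F : α → E) :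
    Integrable F ((ν.restrict e.target).map e.symm) ↔
      IntegrableOn (fun y => F (e.symm y)) e.target ν := by
  rw [map_symm_restrict_target,
    (measurableEmbedding_domRestrict_symm e).integrable_map_iff, IntegrableOn,
    ← map_comap_subtype_coe e.open_target.measurableSet,
    (MeasurableEmbedding.subtype_coe e.open_target.measurableSet).integrable_map_iff]
  rfl

end MapSymm

section Volume

variable {m : ℕ} {M : Type*} [TopologicalSpace M] [ChartedSpace (Euc m) M]

lemma image_transition {p q : M} {s : Set M} (hp : s ⊆ (chartAt (Euc m) p).source)
    (hq : s ⊆ (chartAt (Euc m) q).source) :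
    transition m p q '' ((chartAt (Euc m) p).target ∩ (chartAt (Euc m) p).symm ⁻¹' s) =
      (chartAt (Euc m) q).target ∩ (chartAt (Euc m) q).symm ⁻¹' s := by
  rw [← (chartAt (Euc m) p).image_eq_target_inter_inv_preimage hp,
    ← (chartAt (Euc m) q).image_eq_target_inter_inv_preimage hq, image_image]
  exact image_congr fun x hx => congrArg _ ((chartAt (Euc m) p).left_inv (hp hx))

lemma injOn_transition {p q : M} {s : Set M} (hq : s ⊆ (chartAt (Euc m) q).source) :
    InjOn (transition m p q)
      ((chartAt (Euc m) p).target ∩ (chartAt (Euc m) p).symm ⁻¹' s) :=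
  (chartAt (Euc m) q).injOn.comp ((chartAt (Euc m) p).symm.injOn.mono inter_subset_left)
    fun _ hy => hq hy.2

variable [RiemannianBundle (fun x : M => TangentSpace (𝓡 m) x)] {p q : M}

lemma aemeasurable_volDensity [IsManifold (𝓡 m) ∞ M]
    [IsContMDiffRiemannianBundle (𝓡 m) ∞ (Euc m) (fun x : M => TangentSpace (𝓡 m) x)] (p : M) :
    AEMeasurable (fun y => ENNReal.ofReal (volDensity p y))
      (volume.restrict (chartAt (Euc m) p).target) :=
  ((contDiffOn_volDensity p).continuousOn.aemeasurable
    (chartAt (Euc m) p).open_target.measurableSet).ennreal_ofReal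

variable [MeasurableSpace M]

lemma chartVol_eq_map_restrict_target (p : M) :
    chartVol m p = ((volume.withDensity fun y => ENNReal.ofReal (volDensity p y)).restrict
      (chartAt (Euc m) p).target).map (chartAt (Euc m) p).symm := by
  rw [chartVol, restrict_withDensity (chartAt (Euc m) p).open_target.measurableSet]

variable [BorelSpace M]

lemma chartVol_apply (p : M) {s : Set M} (hs : MeasurableSet s) :
    chartVol m p s = ∫⁻ y in (chartAt (Euc m) p).target ∩ (chartAt (Euc m) p).symm ⁻¹' s,
      ENNReal.ofReal (volDensity p y) := by
  have hsymm : AEMeasurable (chartAt (Euc m) p).symm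
      ((volume.withDensity fun y => ENNReal.ofReal (volDensity p y)).restrict
        (chartAt (Euc m) p).target) :=
    (chartAt (Euc m) p).symm.continuousOn.aemeasurable
      (chartAt (Euc m) p).open_target.measurableSet
  rw [chartVol_eq_map_restrict_target, Measure.map_apply_of_aemeasurable hsymm hs,
    Measure.restrict_apply' (chartAt (Euc m) p).open_target.measurableSet, inter_comm,
    withDensity_apply _ (measurableSet_target_inter_preimage_symm _ hs)]

lemma ae_chartVol_of_ae {P : M → Prop}
    (h : ∀ᵐ y ∂(volume.restrict (chartAt (Euc m) p).target), P ((chartAt (Euc m) p).symm y)) :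
    ∀ᵐ x ∂(chartVol m p), P x := by
  rw [chartVol_eq_map_restrict_target, ae_map_symm_restrict_target_iff,
    restrict_withDensity (chartAt (Euc m) p).open_target.measurableSet]
  exact (withDensity_absolutelyContinuous _ _).ae_le h

lemma chartVol_inter_source (p : M) {s : Set M} (hs : MeasurableSet s) :
    chartVol m p (s ∩ (chartAt (Euc m) p).source) = chartVol m p s := by
  rw [chartVol_apply p (hs.inter (chartAt (Euc m) p).open_source.measurableSet),
    chartVol_apply p hs]
  congr 2
  ext y
  exact ⟨fun h => ⟨h.1, h.2.1⟩, fun h => ⟨h.1, h.2, (chartAt (Euc m) p).map_target h.1⟩⟩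

variable [IsManifold (𝓡 m) ∞ M]

lemma chartVol_overlap {s : Set M} (hs : MeasurableSet s)
    (hp : s ⊆ (chartAt (Euc m) p).source) (hq : s ⊆ (chartAt (Euc m) q).source) :
    chartVol m p s = chartVol m q s := by
  have hmeas := measurableSet_target_inter_preimage_symm (chartAt (Euc m) p) hs
  rw [chartVol_apply p hs, chartVol_apply q hs, ← image_transition hp hq,
    lintegral_image_eq_lintegral_abs_det_fderiv_mul volume hmeas
      (fun y hy => ((hasFDerivAt_transition hy.1 (hq hy.2)).differentiableAt.hasFDerivAt
        |>.hasFDerivWithinAt)) (injOn_transition hq)]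
  refine setLIntegral_congr_fun hmeas fun y hy => ?_
  rw [volDensity_transition hy.1 (hq hy.2), ENNReal.ofReal_mul (abs_nonneg _)]

lemma chartVol_inter_source_le {s : Set M} (hs : MeasurableSet s) (p q : M) :
    chartVol m q (s ∩ (chartAt (Euc m) p).source) ≤ chartVol m p s := by
  have hsp := hs.inter (chartAt (Euc m) p).open_source.measurableSet
  calc chartVol m q (s ∩ (chartAt (Euc m) p).source)
      = chartVol m q (s ∩ (chartAt (Euc m) p).source ∩ (chartAt (Euc m) q).source) :=
        (chartVol_inter_source q hsp).symm
    _ = chartVol m p (s ∩ (chartAt (Euc m) p).source ∩ (chartAt (Euc m) q).source) :=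
        chartVol_overlap (hsp.inter (chartAt (Euc m) q).open_source.measurableSet)
          (fun x hx => hx.2) fun x hx => hx.1.2
    _ ≤ chartVol m p s := measure_mono fun x hx => hx.1.1

lemma rvol_restrict_source (p : M) :
    (rvol m M).restrict (chartAt (Euc m) p).source = chartVol m p := by
  have hsource := (chartAt (Euc m) p).open_source.measurableSet
  have hle : rvol m M ≤ chartVol m p + (⊤ : Measure M).restrict (chartAt (Euc m) p).sourceᶜ := by
    refine iSup_le fun q => Measure.le_iff.2 fun s hs => ?_
    rw [← measure_inter_add_sdiff s hsource, Measure.add_apply, Measure.restrict_apply hs]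
    exact add_le_add (chartVol_inter_source_le hs p q) ((le_top : chartVol m q ≤ ⊤) _)
  refine le_antisymm ?_ (Measure.le_iff.2 fun s hs => ?_)
  · calc (rvol m M).restrict (chartAt (Euc m) p).source
        ≤ (chartVol m p + (⊤ : Measure M).restrict (chartAt (Euc m) p).sourceᶜ).restrict
            (chartAt (Euc m) p).source := Measure.restrict_mono subset_rfl hle
      _ = (chartVol m p).restrict (chartAt (Euc m) p).source := by
        rw [Measure.restrict_add, Measure.restrict_restrict hsource, inter_compl_self,
          Measure.restrict_empty, add_zero]
      _ ≤ chartVol m p := Measure.restrict_le_self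
  · rw [Measure.restrict_apply hs, ← chartVol_inter_source p hs]
    exact le_iSup (fun p => chartVol m p) p _

variable [IsContMDiffRiemannianBundle (𝓡 m) ∞ (Euc m) (fun x : M => TangentSpace (𝓡 m) x)]

lemma integral_chartVol (p : M) (F : M → ℝ) :
    ∫ x, F x ∂(chartVol m p) = ∫ y in (chartAt (Euc m) p).target,
      volDensity p y * F ((chartAt (Euc m) p).symm y) := by
  rw [chartVol_eq_map_restrict_target, integral_map_symm_restrict_target,
    restrict_withDensity (chartAt (Euc m) p).open_target.measurableSet,
    integral_withDensity_eq_integral_toReal_smul₀ (aemeasurable_volDensity p)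
      (.of_forall fun _ => ENNReal.ofReal_lt_top)]
  simp [volDensity, Real.sqrt_nonneg]

lemma integrable_chartVol_iff (p : M) (F : M → ℝ) :
    Integrable F (chartVol m p) ↔ IntegrableOn (fun y =>
      volDensity p y * F ((chartAt (Euc m) p).symm y)) (chartAt (Euc m) p).target := by
  rw [chartVol_eq_map_restrict_target, integrable_map_symm_restrict_target_iff, IntegrableOn,
    restrict_withDensity (chartAt (Euc m) p).open_target.measurableSet,
    integrable_withDensity_iff_integrable_smul₀' (aemeasurable_volDensity p)
      (.of_forall fun _ => ENNReal.ofReal_lt_top)]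
  simp [volDensity, Real.sqrt_nonneg, IntegrableOn]

end Volume

lemma norm_map_le_sum_mul_norm {𝕜 ι V W : Type*} [RCLike 𝕜] [Fintype ι]
    [NormedAddCommGroup V] [InnerProductSpace 𝕜 V] [SeminormedAddCommGroup W] [NormedSpace 𝕜 W]
    (b : OrthonormalBasis ι 𝕜 V) (L : V →ₗ[𝕜] W) (v : V) :
    ‖L v‖ ≤ (∑ i, ‖L (b i)‖) * ‖v‖ := by
  calc ‖L v‖ = ‖∑ i, inner 𝕜 (b i) v • L (b i)‖ := by
        rw [← congrArg L (b.sum_repr' v), map_sum]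
        simp only [map_smul]
    _ ≤ ∑ i, ‖inner 𝕜 (b i) v‖ * ‖L (b i)‖ :=
        norm_sum_le_of_le _ fun i _ => norm_smul_le _ _
    _ ≤ ∑ i, ‖v‖ * ‖L (b i)‖ := Finset.sum_le_sum fun i _ => by
        gcongr
        simpa using norm_inner_le_norm (𝕜 := 𝕜) (b i) v
    _ = (∑ i, ‖L (b i)‖) * ‖v‖ := by rw [← Finset.mul_sum, mul_comm]

section ChartDistance

variable {m : ℕ} {M : Type*} [MetricSpace M] [ChartedSpace (Euc m) M]
  [RiemannianBundle (fun x : M => TangentSpace (𝓡 m) x)] {p x : M} {a b : Euc m} {c : ℝ}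

lemma norm_eq_sqrt_metricForm (x : M) (u : TangentSpace (𝓡 m) x) :
    ‖u‖ = √(metricForm x u u) :=
  norm_eq_sqrt_real_inner u

lemma norm_mfderiv_chart_symm_le (p : M) (y v : Euc m) :
    ‖mfderiv (𝓡 m) (𝓡 m) (chartAt (Euc m) p).symm y v‖ ≤ (∑ i, ‖coordVec p i y‖) * ‖v‖ := by
  have hle := norm_map_le_sum_mul_norm (W := TangentSpace (𝓡 m) ((chartAt (Euc m) p).symm y))
    (EuclideanSpace.basisFun (Fin m) ℝ) (symmDeriv p y).toLinearMap v
  simp only [EuclideanSpace.basisFun_apply] at hle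
  exact hle

variable [IsManifold (𝓡 m) ∞ M]

lemma dist_chart_symm_le [IsRiemannianManifold (𝓡 m) M]
    (hseg : segment ℝ a b ⊆ (chartAt (Euc m) p).target)
    (hle : ∀ z ∈ segment ℝ a b,
      ‖mfderiv (𝓡 m) (𝓡 m) (chartAt (Euc m) p).symm z (b - a)‖ ≤ c) :
    dist ((chartAt (Euc m) p).symm a) ((chartAt (Euc m) p).symm b) ≤ c := by
  have hmem : ∀ t ∈ Icc (0 : ℝ) 1, AffineMap.lineMap a b t ∈ segment ℝ a b := fun t ht => by
    rw [segment_eq_image_lineMap]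
    exact mem_image_of_mem _ ht
  have hsymm : ContMDiffOn (𝓡 m) (𝓡 m) 1 (chartAt (Euc m) p).symm (chartAt (Euc m) p).target :=
    (contMDiffOn_chart_symm (n := ∞)).of_le (by norm_cast)
  have hγ : ContMDiffOn 𝓘(ℝ, ℝ) (𝓡 m) 1
      ((chartAt (Euc m) p).symm ∘ AffineMap.lineMap (k := ℝ) a b) (Icc 0 1) :=
    hsymm.comp (ContDiff.contMDiff (by
      simp only [AffineMap.coe_lineMap, vsub_eq_sub, vadd_eq_add]; fun_prop)).contMDiffOn
      fun t ht => hseg (hmem t ht)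
  simpa using dist_le_of_norm_mfderiv_le hγ fun t ht => by
    have hderiv : HasMFDerivAt 𝓘(ℝ, ℝ) (𝓡 m)
        ((chartAt (Euc m) p).symm ∘ AffineMap.lineMap (k := ℝ) a b) t
        ((symmDeriv p (AffineMap.lineMap a b t)).comp ((1 : ℝ →L[ℝ] ℝ).smulRight (b - a))) :=
      ((mdifferentiable_chart (I := 𝓡 m) p).mdifferentiableAt_symm
        (hseg (hmem t ht))).hasMFDerivAt.comp t
        AffineMap.hasDerivAt_lineMap.hasFDerivAt.hasMFDerivAt
    have hone : mfderiv 𝓘(ℝ, ℝ) (𝓡 m)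
        ((chartAt (Euc m) p).symm ∘ AffineMap.lineMap (k := ℝ) a b) t 1 =
        symmDeriv p (AffineMap.lineMap a b t) (b - a) := by
      rw [hderiv.mfderiv]
      exact congrArg (symmDeriv p (AffineMap.lineMap a b t)) (one_smul ℝ (b - a))
    exact (congrArg (fun u : TangentSpace (𝓡 m)
      ((chartAt (Euc m) p).symm (AffineMap.lineMap a b t)) => ‖u‖) hone).trans_le
        (hle _ (hmem t ht))

variable [IsContMDiffRiemannianBundle (𝓡 m) ∞ (Euc m) (fun x : M => TangentSpace (𝓡 m) x)]

lemma continuousOn_norm_mfderiv_chart_symm (p : M) (v : Euc m) :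
    ContinuousOn (fun y => ‖mfderiv (𝓡 m) (𝓡 m) (chartAt (Euc m) p).symm y v‖)
      (chartAt (Euc m) p).target :=
  (contDiffOn_inner_symmDeriv p v v).continuousOn.sqrt.congr fun _ _ =>
    norm_eq_sqrt_metricForm _ _

variable [IsRiemannianManifold (𝓡 m) M]

lemma locallyLipschitzOn_chart_symm (p : M) :
    LocallyLipschitzOn (chartAt (Euc m) p).target (chartAt (Euc m) p).symm := by
  intro y hy
  have htarget := (chartAt (Euc m) p).open_target.mem_nhds hy
  have hcont : ContinuousAt (fun z => ∑ i, ‖coordVec p i z‖) y :=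
    (continuousOn_finsetSum _ fun i _ =>
      continuousOn_norm_mfderiv_chart_symm p (EuclideanSpace.single i 1)).continuousAt htarget
  obtain ⟨ε, hε, hball⟩ := Metric.eventually_nhds_iff_ball.1
    ((eventually_mem_set.2 htarget).and
      (hcont.eventually_lt_const (lt_add_one (∑ i, ‖coordVec p i y‖))))
  refine ⟨Real.toNNReal (∑ i, ‖coordVec p i y‖ + 1), ball y ε,
    mem_nhdsWithin_of_mem_nhds (ball_mem_nhds y hε), LipschitzOnWith.of_dist_le_mul ?_⟩
  intro a ha b hb
  have hseg := (convex_ball y ε).segment_subset ha hb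
  rw [Real.coe_toNNReal _ (by positivity), dist_comm a b, dist_eq_norm b a]
  exact dist_chart_symm_le (fun z hz => (hball z (hseg hz)).1) fun z hz =>
    (norm_mfderiv_chart_symm_le p z (b - a)).trans (by gcongr; exact (hball z (hseg hz)).2.le)

lemma eventually_dist_chart_symm_le {y v : Euc m} (hy : y ∈ (chartAt (Euc m) p).target)
    (hc : ‖mfderiv (𝓡 m) (𝓡 m) (chartAt (Euc m) p).symm y v‖ < c) :
    ∀ᶠ t in 𝓝 (0 : ℝ), dist ((chartAt (Euc m) p).symm (y + t • v))
      ((chartAt (Euc m) p).symm y) ≤ c * |t| := by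
  have htarget := (chartAt (Euc m) p).open_target.mem_nhds hy
  obtain ⟨ε, hε, hball⟩ := Metric.eventually_nhds_iff_ball.1
    ((eventually_mem_set.2 htarget).and
      (((continuousOn_norm_mfderiv_chart_symm p v).continuousAt htarget).eventually_lt_const hc))
  have hline : Tendsto (fun t : ℝ => y + t • v) (𝓝 0) (𝓝 y) := by
    simpa using (by fun_prop : Continuous fun t : ℝ => y + t • v).tendsto 0
  filter_upwards [hline (ball_mem_nhds y hε)] with t ht
  have hseg := (convex_ball y ε).segment_subset (mem_ball_self hε) ht
  rw [dist_comm]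
  refine dist_chart_symm_le (fun z hz => (hball z (hseg hz)).1) fun z hz => ?_
  have hsmul : ‖mfderiv (𝓡 m) (𝓡 m) (chartAt (Euc m) p).symm z (t • v)‖ =
      |t| * ‖mfderiv (𝓡 m) (𝓡 m) (chartAt (Euc m) p).symm z v‖ := by
    have hform : metricForm ((chartAt (Euc m) p).symm z) (symmDeriv p z (t • v))
        (symmDeriv p z (t • v)) = t ^ 2 * metricForm ((chartAt (Euc m) p).symm z)
          (symmDeriv p z v) (symmDeriv p z v) := by
      simp only [map_smul, LinearMap.smul_apply, smul_eq_mul]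
      ring
    exact (norm_eq_sqrt_metricForm _ _).trans ((congrArg Real.sqrt hform).trans (by
      rw [Real.sqrt_mul (sq_nonneg t), Real.sqrt_sq_eq_abs]
      exact congrArg (|t| * ·) (norm_eq_sqrt_metricForm _ _).symm))
  rw [add_sub_cancel_left, hsmul, mul_comm c]
  gcongr
  exact (hball z (hseg hz)).2.le

lemma abs_differential_le_of_lipschitzWith {φ : M → ℝ} {K : NNReal} (hφ : LipschitzWith K φ)
    (hd : MDifferentiableAt (𝓡 m) 𝓘(ℝ, ℝ) φ x) (v : TangentSpace (𝓡 m) x) :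
    |differential φ x v| ≤ K * ‖v‖ := by
  have hx := mem_chart_source (Euc m) x
  set y := chartAt (Euc m) x x
  set u : Euc m := chartDeriv x x v
  have hu : symmDeriv x y u = v := symmDeriv_chartDeriv hx v
  have hline : HasDerivAt (fun t : ℝ => φ ((chartAt (Euc m) x).symm (y + t • u)))
      (differential φ x v) 0 := by
    have haff : HasDerivAt (fun t : ℝ => y + t • u) u 0 := by
      simpa using ((hasDerivAt_id (0 : ℝ)).smul_const u).const_add y
    rw [← hu]
    exact HasFDerivAt.comp_hasDerivAt_of_eq (0 : ℝ) (hasFDerivAt_comp_chart_symm hx hd) haff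
      (by simp [y])
  have hnorm : ‖mfderiv (𝓡 m) (𝓡 m) (chartAt (Euc m) x).symm y u‖ = ‖v‖ := by
    calc ‖mfderiv (𝓡 m) (𝓡 m) (chartAt (Euc m) x).symm y u‖
        = √(metricForm ((chartAt (Euc m) x).symm y) (symmDeriv x y u) (symmDeriv x y u)) :=
          norm_eq_sqrt_metricForm _ _
      _ = √(metricForm x v v) := by rw [hu, (chartAt (Euc m) x).left_inv hx]
      _ = ‖v‖ := (norm_eq_sqrt_metricForm x v).symm
  have hbound : ∀ c, ‖v‖ < c → |differential φ x v| ≤ K * c := fun c hc => by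
    refine HasDerivAt.le_of_lip' hline (by positivity [(norm_nonneg v).trans hc.le]) ?_
    filter_upwards [eventually_dist_chart_symm_le ((chartAt (Euc m) x).map_source hx)
      (hnorm.trans_lt hc)] with t ht
    simp only [zero_smul, add_zero, sub_zero, Real.norm_eq_abs, mul_assoc]
    exact (hφ.dist_le_mul _ _).trans (by gcongr)
  exact ge_of_tendsto ((continuous_const.mul continuous_id).continuousWithinAt (s := Ioi ‖v‖))
    (eventually_mem_nhdsWithin.mono hbound)

end ChartDistance

section ChartLipschitz

variable {m : ℕ} {M : Type*} [TopologicalSpace M] [ChartedSpace (Euc m) M] {f g : M → ℝ}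

/-- `f` is locally Lipschitz in all charts: the regularity of the test functions in the divergence
theorem, for which no distance on `M` is needed. -/
def ChartLipschitz (m : ℕ) {M : Type*} [TopologicalSpace M] [ChartedSpace (Euc m) M] (f : M → ℝ) :
    Prop :=
  ∀ p : M, LocallyLipschitzOn (chartAt (Euc m) p).target (f ∘ (chartAt (Euc m) p).symm)

lemma ChartLipschitz.mul (hf : ChartLipschitz m f) (hg : ChartLipschitz m g) :
    ChartLipschitz m (fun x => f x * g x) :=
  fun p => locallyLipschitzOn_mul (hf p) (hg p)

lemma chartLipschitz_of_contMDiffOn [IsManifold (𝓡 m) ∞ M] {Ω : Set M}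
    (hΩ : IsOpen Ω) (hf : ContMDiffOn (𝓡 m) 𝓘(ℝ, ℝ) 1 f Ω) (hs : tsupport f ⊆ Ω) :
    ChartLipschitz m f := by
  intro p y hy
  by_cases hyf : (chartAt (Euc m) p).symm y ∈ tsupport f
  · have hU := (chartAt (Euc m) p).isOpen_inter_preimage_symm hΩ
    obtain ⟨K, t, ht, hK⟩ := locallyLipschitzOn_of_contDiffOn hU
      (contDiffOn_comp_chart_symm hf p) ⟨hy, hs hyf⟩
    rw [hU.nhdsWithin_eq ⟨hy, hs hyf⟩] at ht
    exact ⟨K, t, mem_nhdsWithin_of_mem_nhds ht, hK⟩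
  · refine ⟨0, _, mem_nhdsWithin_of_mem_nhds (((chartAt (Euc m) p).isOpen_inter_preimage_symm
      (isClosed_tsupport f).isOpen_compl).mem_nhds ⟨hy, hyf⟩), fun a ha b hb => ?_⟩
    simp [image_eq_zero_of_notMem_tsupport ha.2, image_eq_zero_of_notMem_tsupport hb.2]

lemma differential_eq_zero_of_notMem_tsupport {x : M} (hx : x ∉ tsupport f) (v : Euc m) :
    differential f x v = 0 := by
  rw [differential, (notMem_tsupport_iff_eventuallyEq.1 hx).mfderiv_eq, Pi.zero_def, mfderiv_const]
  rfl

lemma mul_add_differential_eq_zero_of_notMem_tsupport {x : M} (hx : x ∉ tsupport f) (c : ℝ)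
    (v : Euc m) : f x * c + differential f x v = 0 := by
  rw [image_eq_zero_of_notMem_tsupport hx, differential_eq_zero_of_notMem_tsupport hx, zero_mul,
    add_zero]

lemma differential_sum {ι : Type*} {F : ι → M → ℝ} {x : M} (s : Finset ι)
    (hF : ∀ i ∈ s, MDifferentiableAt (𝓡 m) 𝓘(ℝ, ℝ) (F i) x) :
    differential (m := m) (∑ i ∈ s, F i) x = ∑ i ∈ s, differential (F i) x := by
  classical
  suffices h : ∀ L : Euc m →L[ℝ] ℝ, L = ∑ i ∈ s, differential (F i) x →
      HasMFDerivAt (𝓡 m) 𝓘(ℝ, ℝ) (∑ i ∈ s, F i) x L from (h _ rfl).mfderiv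
  induction s using Finset.induction_on with
  | empty =>
    rintro _ rfl
    exact hasMFDerivAt_const (I := 𝓡 m) (I' := 𝓘(ℝ, ℝ)) (0 : ℝ) x
  | insert i s hi ih =>
    rintro _ rfl
    rw [Finset.sum_insert hi, Finset.sum_insert hi]
    exact (hF i (Finset.mem_insert_self i s)).hasMFDerivAt.add
      (ih (fun j hj => hF j (Finset.mem_insert_of_mem hj)) _ rfl)

end ChartLipschitz

section ChartDivergence

variable {m : ℕ} {M : Type*} [TopologicalSpace M] [ChartedSpace (Euc m) M] {p : M} {y : Euc m}
  {f : M → ℝ} {Ω : Set M} {X : ∀ x : M, TangentSpace (𝓡 m) x}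

lemma mapsTo_chart_inter_source (p : M) (Ω : Set M) :
    MapsTo (chartAt (Euc m) p) (Ω ∩ (chartAt (Euc m) p).source)
      ((chartAt (Euc m) p).target ∩ (chartAt (Euc m) p).symm ⁻¹' Ω) := fun x hx => by
  refine ⟨(chartAt (Euc m) p).map_source hx.2, ?_⟩
  rw [mem_preimage, (chartAt (Euc m) p).left_inv hx.2]
  exact hx.1

lemma differential_eq_sum_coordComp [IsManifold (𝓡 m) ∞ M]
    (hy : y ∈ (chartAt (Euc m) p).target) :
    differential f ((chartAt (Euc m) p).symm y) (X ((chartAt (Euc m) p).symm y)) =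
      ∑ i, coordComp p X i y * differential f ((chartAt (Euc m) p).symm y)
        (symmDeriv p y (EuclideanSpace.single i 1)) := by
  set x := (chartAt (Euc m) p).symm y
  have hbasis := (EuclideanSpace.basisFun (Fin m) ℝ).sum_repr (chartDeriv p x (X x))
  have hXx : symmDeriv p y (chartDeriv p x (X x)) = X x := by
    have h := symmDeriv_chartDeriv ((chartAt (Euc m) p).map_target hy) (X x)
    rwa [(chartAt (Euc m) p).right_inv hy] at h
  conv_lhs => rw [← hXx, ← hbasis]
  simp only [map_sum, map_smul, smul_eq_mul, EuclideanSpace.basisFun_apply,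
    EuclideanSpace.basisFun_repr]
  rfl

variable [RiemannianBundle (fun x : M => TangentSpace (𝓡 m) x)]

/-- The divergence of `X` at `x`, computed in the chart around `p`. -/
def coordDiv (p : M) (X : ∀ x : M, TangentSpace (𝓡 m) x) (x : M) : ℝ :=
  (volDensity p (chartAt (Euc m) p x))⁻¹ *
    ∑ i : Fin m, fderiv ℝ (fun y : Euc m => volDensity p y * coordComp p X i y)
      (chartAt (Euc m) p x) (EuclideanSpace.single i 1)

/-- The density `√g f Xⁱ` of the flux of `f X` in the `i`-th coordinate direction of the chart
around `p`, extended by zero to the whole of `ℝᵐ`. -/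
def coordFlux (p : M) (f : M → ℝ) (X : ∀ x : M, TangentSpace (𝓡 m) x) (i : Fin m) : Euc m → ℝ :=
  (chartAt (Euc m) p).target.indicator
    fun y => f ((chartAt (Euc m) p).symm y) * (volDensity p y * coordComp p X i y)

lemma coordFlux_eventuallyEq (hy : y ∈ (chartAt (Euc m) p).target) (i : Fin m) :
    coordFlux p f X i =ᶠ[𝓝 y] fun z =>
      f ((chartAt (Euc m) p).symm z) * (volDensity p z * coordComp p X i z) :=
  (eventually_mem_set.2 ((chartAt (Euc m) p).open_target.mem_nhds hy)).mono
    fun _ hz => indicator_of_mem hz _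

lemma tsupport_coordFlux_subset (hc : HasCompactSupport f)
    (hs : tsupport f ⊆ (chartAt (Euc m) p).source) (i : Fin m) :
    tsupport (coordFlux p f X i) ⊆ chartAt (Euc m) p '' tsupport f := by
  refine closure_minimal (fun y hy => ?_)
    (hc.isCompact.image_of_continuousOn ((chartAt (Euc m) p).continuousOn.mono hs)).isClosed
  rw [Function.mem_support, coordFlux, indicator_apply_ne_zero] at hy
  exact ⟨_, subset_tsupport _ (left_ne_zero_of_mul (Function.mem_support.1 hy.2)),
    (chartAt (Euc m) p).right_inv hy.1⟩

lemma hasCompactSupport_coordFlux (hc : HasCompactSupport f)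
    (hs : tsupport f ⊆ (chartAt (Euc m) p).source) (i : Fin m) :
    HasCompactSupport (coordFlux p f X i) :=
  (hc.isCompact.image_of_continuousOn ((chartAt (Euc m) p).continuousOn.mono hs))
    |>.of_isClosed_subset (isClosed_tsupport _) (tsupport_coordFlux_subset hc hs i)

lemma fderiv_coordFlux_eq_zero (hc : HasCompactSupport f)
    (hs : tsupport f ⊆ (chartAt (Euc m) p).source)
    (hy : y ∈ (chartAt (Euc m) p).target → (chartAt (Euc m) p).symm y ∉ tsupport f) (i : Fin m) :
    fderiv ℝ (coordFlux p f X i) y = 0 := by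
  refine fderiv_of_notMem_tsupport ℝ fun h => ?_
  obtain ⟨x, hx, rfl⟩ := tsupport_coordFlux_subset hc hs i h
  refine hy ((chartAt (Euc m) p).map_source (hs hx)) ?_
  rwa [(chartAt (Euc m) p).left_inv (hs hx)]

variable [IsManifold (𝓡 m) ∞ M]
  [IsContMDiffRiemannianBundle (𝓡 m) ∞ (Euc m) (fun x : M => TangentSpace (𝓡 m) x)]

lemma contDiffOn_volDensity_mul_coordComp (hX : IsC1FieldOn X Ω) (p : M) (i : Fin m) :
    ContDiffOn ℝ 1 (fun y : Euc m => volDensity p y * coordComp p X i y)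
      ((chartAt (Euc m) p).target ∩ (chartAt (Euc m) p).symm ⁻¹' Ω) :=
  ((contDiffOn_volDensity p).mono inter_subset_left).mul (contDiffOn_coordComp hX p i)

lemma continuousOn_coordDiv (hΩ : IsOpen Ω) (hX : IsC1FieldOn X Ω) (p : M) :
    ContinuousOn (coordDiv p X) (Ω ∩ (chartAt (Euc m) p).source) := by
  have hchart : ContinuousOn (chartAt (Euc m) p) (Ω ∩ (chartAt (Euc m) p).source) :=
    (chartAt (Euc m) p).continuousOn.mono inter_subset_right
  have hmaps := mapsTo_chart_inter_source (m := m) p Ω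
  refine ContinuousOn.mul ?_ (continuousOn_finsetSum _ fun i _ => ?_)
  · exact ContinuousOn.inv₀ (((contDiffOn_volDensity p).continuousOn.mono inter_subset_left).comp
      hchart hmaps) fun x hx => (volDensity_pos ((chartAt (Euc m) p).map_source hx.2)).ne'
  · have hfderiv := (contDiffOn_volDensity_mul_coordComp hX p i).continuousOn_fderiv_of_isOpen
      ((chartAt (Euc m) p).isOpen_inter_preimage_symm hΩ) le_rfl
    exact (hfderiv.clm_apply continuousOn_const).comp hchart hmaps

lemma locallyLipschitz_coordFlux (hΩ : IsOpen Ω) (hX : IsC1FieldOn X Ω) (hf : ChartLipschitz m f)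
    (hc : HasCompactSupport f) (hs : tsupport f ⊆ Ω ∩ (chartAt (Euc m) p).source) (i : Fin m) :
    LocallyLipschitz (coordFlux p f X i) := by
  have hU := (chartAt (Euc m) p).isOpen_inter_preimage_symm hΩ
  have hprod := locallyLipschitzOn_mul ((hf p).mono inter_subset_left)
    (locallyLipschitzOn_of_contDiffOn hU (contDiffOn_volDensity_mul_coordComp hX p i))
  refine locallyLipschitz_of_tsupport_subset hU (fun y hy => ?_)
    ((tsupport_coordFlux_subset hc (hs.trans inter_subset_right) i).trans
      ((mapsTo_chart_inter_source p Ω).mono_left hs).image_subset)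
  obtain ⟨K, t, ht, hK⟩ := hprod hy
  refine ⟨K, _, inter_mem ht self_mem_nhdsWithin, fun a ha b hb => ?_⟩
  rw [coordFlux, indicator_of_mem ha.2.1, indicator_of_mem hb.2.1]
  exact hK ha.1 hb.1

lemma sum_fderiv_coordFlux_of_mem (hΩ : IsOpen Ω) (hX : IsC1FieldOn X Ω)
    (hy : y ∈ (chartAt (Euc m) p).target ∩ (chartAt (Euc m) p).symm ⁻¹' Ω)
    (hd : DifferentiableAt ℝ (f ∘ (chartAt (Euc m) p).symm) y) :
    ∑ i, fderiv ℝ (coordFlux p f X i) y (EuclideanSpace.single i 1) =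
      volDensity p y * (f ((chartAt (Euc m) p).symm y) * coordDiv p X ((chartAt (Euc m) p).symm y) +
        differential f ((chartAt (Euc m) p).symm y) (X ((chartAt (Euc m) p).symm y))) := by
  have hx := (chartAt (Euc m) p).map_target hy.1
  have hxy : chartAt (Euc m) p ((chartAt (Euc m) p).symm y) = y :=
    (chartAt (Euc m) p).right_inv hy.1
  have hU := (chartAt (Euc m) p).isOpen_inter_preimage_symm hΩ
  have hf := hasFDerivAt_comp_chart_symm hx
    (mdifferentiableAt_of_comp_chart_symm hx (by rwa [hxy]))
  rw [hxy] at hf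
  have hflux : ∀ i, fderiv ℝ (coordFlux p f X i) y (EuclideanSpace.single i 1) =
      f ((chartAt (Euc m) p).symm y) * fderiv ℝ (fun y => volDensity p y * coordComp p X i y) y
        (EuclideanSpace.single i 1) +
      volDensity p y * (coordComp p X i y * differential f ((chartAt (Euc m) p).symm y)
        (symmDeriv p y (EuclideanSpace.single i 1))) := fun i => by
    have hcomp := ((contDiffOn_volDensity_mul_coordComp hX p i).contDiffAt
      (hU.mem_nhds hy)).differentiableAt one_ne_zero
    rw [((hf.fun_mul hcomp.hasFDerivAt).congr_of_eventuallyEq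
      (coordFlux_eventuallyEq hy.1 i)).fderiv]
    simp only [Function.comp_apply, add_apply, smul_apply, smul_eq_mul,
      ContinuousLinearMap.comp_apply]
    ring
  simp only [hflux]
  rw [Finset.sum_add_distrib, ← Finset.mul_sum, ← Finset.mul_sum,
    ← differential_eq_sum_coordComp hy.1, coordDiv, hxy]
  field_simp [(volDensity_pos hy.1).ne']

lemma sum_fderiv_coordFlux (hΩ : IsOpen Ω) (hX : IsC1FieldOn X Ω) (hc : HasCompactSupport f)
    (hs : tsupport f ⊆ Ω ∩ (chartAt (Euc m) p).source) (hy : y ∈ (chartAt (Euc m) p).target)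
    (hd : DifferentiableAt ℝ (f ∘ (chartAt (Euc m) p).symm) y) :
    ∑ i, fderiv ℝ (coordFlux p f X i) y (EuclideanSpace.single i 1) =
      volDensity p y * (f ((chartAt (Euc m) p).symm y) * coordDiv p X ((chartAt (Euc m) p).symm y) +
        differential f ((chartAt (Euc m) p).symm y) (X ((chartAt (Euc m) p).symm y))) := by
  by_cases hyf : (chartAt (Euc m) p).symm y ∈ tsupport f
  · exact sum_fderiv_coordFlux_of_mem hΩ hX ⟨hy, (hs hyf).1⟩ hd
  · have hdf : differential f ((chartAt (Euc m) p).symm y) (X ((chartAt (Euc m) p).symm y)) = 0 :=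
      differential_eq_zero_of_notMem_tsupport hyf _
    simp [fderiv_coordFlux_eq_zero hc (hs.trans inter_subset_right) fun _ => hyf,
      image_eq_zero_of_notMem_tsupport hyf, hdf]

lemma sum_fderiv_coordFlux_ae_eq (hΩ : IsOpen Ω) (hX : IsC1FieldOn X Ω) (hf : ChartLipschitz m f)
    (hc : HasCompactSupport f) (hs : tsupport f ⊆ Ω ∩ (chartAt (Euc m) p).source) :
    (fun y => ∑ i, fderiv ℝ (coordFlux p f X i) y (EuclideanSpace.single i 1))
      =ᵐ[volume.restrict (chartAt (Euc m) p).target] fun y => volDensity p y *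
      (f ((chartAt (Euc m) p).symm y) * coordDiv p X ((chartAt (Euc m) p).symm y) +
        differential f ((chartAt (Euc m) p).symm y) (X ((chartAt (Euc m) p).symm y))) := by
  filter_upwards [ae_differentiableAt_of_locallyLipschitzOn volume
    (chartAt (Euc m) p).open_target (hf p),
    ae_restrict_mem (chartAt (Euc m) p).open_target.measurableSet] with y hd hy
  exact sum_fderiv_coordFlux hΩ hX hc hs hy hd

variable [MeasurableSpace M] [BorelSpace M]

lemma integrable_mul_coordDiv_add_differential (hΩ : IsOpen Ω) (hX : IsC1FieldOn X Ω)
    (hf : ChartLipschitz m f) (hc : HasCompactSupport f)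
    (hs : tsupport f ⊆ Ω ∩ (chartAt (Euc m) p).source) :
    Integrable (fun x => f x * coordDiv p X x + differential f x (X x)) (rvol m M) := by
  have hzero : ∀ x ∉ (chartAt (Euc m) p).source,
      f x * coordDiv p X x + differential f x (X x) = 0 := fun x hx =>
    mul_add_differential_eq_zero_of_notMem_tsupport (fun h => hx (hs h).2) _ _
  rw [← integrableOn_iff_integrable_of_support_subset
    fun x hx => by_contra fun h => hx (hzero x h),
    IntegrableOn, rvol_restrict_source, integrable_chartVol_iff]
  refine Integrable.congr ?_ (sum_fderiv_coordFlux_ae_eq hΩ hX hf hc hs)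
  exact (integrable_finsetSum _ fun i _ => integrable_fderiv_of_locallyLipschitz volume
    (locallyLipschitz_coordFlux hΩ hX hf hc hs i)
    (hasCompactSupport_coordFlux hc (hs.trans inter_subset_right) i) _).integrableOn

lemma integral_mul_coordDiv_add_differential (hΩ : IsOpen Ω) (hX : IsC1FieldOn X Ω)
    (hf : ChartLipschitz m f) (hc : HasCompactSupport f)
    (hs : tsupport f ⊆ Ω ∩ (chartAt (Euc m) p).source) :
    ∫ x, (f x * coordDiv p X x + differential f x (X x)) ∂(rvol m M) = 0 := by
  have hsp := hs.trans inter_subset_right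
  have hlip := locallyLipschitz_coordFlux hΩ hX hf hc hs
  have hzero : ∀ x ∉ (chartAt (Euc m) p).source,
      f x * coordDiv p X x + differential f x (X x) = 0 := fun x hx =>
    mul_add_differential_eq_zero_of_notMem_tsupport (fun h => hx (hs h).2) _ _
  rw [← setIntegral_eq_integral_of_forall_compl_eq_zero hzero,
    rvol_restrict_source, integral_chartVol,
    ← integral_congr_ae (sum_fderiv_coordFlux_ae_eq hΩ hX hf hc hs),
    setIntegral_eq_integral_of_forall_compl_eq_zero fun y hy => Finset.sum_eq_zero fun i _ => by
      rw [fderiv_coordFlux_eq_zero hc hsp fun h => absurd h hy, zero_apply],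
    integral_finsetSum _ fun i _ => integrable_fderiv_of_locallyLipschitz volume (hlip i)
      (hasCompactSupport_coordFlux hc hsp i) _]
  exact Finset.sum_eq_zero fun i _ => integral_fderiv_eq_zero_of_locallyLipschitz volume (hlip i)
    (hasCompactSupport_coordFlux hc hsp i) _

end ChartDivergence

section VolumeRegularity

variable {m : ℕ} {M : Type*} [TopologicalSpace M] [ChartedSpace (Euc m) M]
  [RiemannianBundle (fun x : M => TangentSpace (𝓡 m) x)] [IsManifold (𝓡 m) ∞ M]
  [MeasurableSpace M] [BorelSpace M]

lemma ChartLipschitz.ae_mdifferentiableAt [SigmaCompactSpace M] {f : M → ℝ}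
    (hf : ChartLipschitz m f) : ∀ᵐ x ∂(rvol m M), MDifferentiableAt (𝓡 m) 𝓘(ℝ, ℝ) f x := by
  have := ChartedSpace.secondCountable_of_sigmaCompact (Euc m) M
  rw [ae_iff]
  refine measure_null_of_locally_null _ fun x _ => ⟨_, inter_mem_nhdsWithin _
    ((chartAt (Euc m) x).open_source.mem_nhds (mem_chart_source (Euc m) x)), ?_⟩
  rw [← Measure.restrict_apply' (chartAt (Euc m) x).open_source.measurableSet,
    rvol_restrict_source, ← ae_iff]
  refine ae_chartVol_of_ae ?_
  filter_upwards [ae_differentiableAt_of_locallyLipschitzOn volume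
      (chartAt (Euc m) x).open_target (hf x),
      ae_restrict_mem (chartAt (Euc m) x).open_target.measurableSet] with y hd hy
  refine mdifferentiableAt_of_comp_chart_symm ((chartAt (Euc m) x).map_target hy) ?_
  rwa [(chartAt (Euc m) x).right_inv hy]

variable [IsContMDiffRiemannianBundle (𝓡 m) ∞ (Euc m) (fun x : M => TangentSpace (𝓡 m) x)]

lemma isLocallyFiniteMeasure_rvol : IsLocallyFiniteMeasure (rvol m M) := by
  refine ⟨fun x => ?_⟩
  have hx := (chartAt (Euc m) x).map_source (mem_chart_source (Euc m) x)
  obtain ⟨K, hK, hKt, hKc⟩ := local_compact_nhds ((chartAt (Euc m) x).open_target.mem_nhds hx)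
  set s := (chartAt (Euc m) x).source ∩ chartAt (Euc m) x ⁻¹' interior K
  have hs : IsOpen s := (chartAt (Euc m) x).isOpen_inter_preimage isOpen_interior
  refine ⟨s, hs.mem_nhds ⟨mem_chart_source _ x, mem_interior_iff_mem_nhds.2 hK⟩, ?_⟩
  calc rvol m M s = chartVol m x s := by
        rw [← rvol_restrict_source, Measure.restrict_apply hs.measurableSet,
          inter_eq_left.2 inter_subset_left]
    _ ≤ ∫⁻ y in K, ENNReal.ofReal (volDensity x y) := by
        rw [chartVol_apply x hs.measurableSet]
        refine lintegral_mono_set fun y hy => interior_subset ?_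
        rw [← (chartAt (Euc m) x).right_inv hy.1]
        exact hy.2.2
    _ < ⊤ := ((contDiffOn_volDensity x).continuousOn.mono hKt).integrableOn_compact hKc
        |>.lintegral_lt_top

lemma isOpenPosMeasure_rvol : (rvol m M).IsOpenPosMeasure := by
  refine ⟨fun U hU ⟨x, hx⟩ hzero => ?_⟩
  have hV := (chartAt (Euc m) x).isOpen_inter_preimage_symm hU
  have hchart : chartVol m x U = 0 :=
    le_antisymm ((le_iSup (fun p => chartVol m p) x U).trans hzero.le) zero_le
  rw [chartVol_apply x hU.measurableSet, lintegral_eq_zero_iff' ((aemeasurable_volDensity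
    x).mono_measure (Measure.restrict_mono inter_subset_left le_rfl)), EventuallyEq,
    ae_restrict_iff' hV.measurableSet] at hchart
  refine (hV.measure_pos volume ⟨chartAt (Euc m) x x,
    (mapsTo_chart_inter_source x U) ⟨hx, mem_chart_source _ x⟩⟩).ne'
      (measure_mono_null (fun y hy => ?_) (ae_iff.1 hchart))
  simp only [Pi.zero_apply, ENNReal.ofReal_eq_zero, not_le, Classical.not_imp, mem_ofPred_eq]
  exact ⟨hy, volDensity_pos hy.1⟩

end VolumeRegularity

section DivergenceTheorem

lemma exists_finset_partition_chartAt_source {E H M : Type*} [NormedAddCommGroup E]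
    [NormedSpace ℝ E] [FiniteDimensional ℝ E] [TopologicalSpace H] (I : ModelWithCorners ℝ E H)
    [TopologicalSpace M] [ChartedSpace H M] [IsManifold I ∞ M] [T2Space M] [SigmaCompactSpace M]
    {K : Set M} (hK : IsCompact K) :
    ∃ (s : Finset M) (χ : M → M → ℝ), (∀ p, ContMDiff I 𝓘(ℝ, ℝ) ∞ (χ p)) ∧
      (∀ p, tsupport (χ p) ⊆ (chartAt H p).source) ∧ ∀ x ∈ K, ∑ p ∈ s, χ p x = 1 := by
  obtain ⟨χ, hχ⟩ := SmoothPartitionOfUnity.exists_isSubordinate_chartAt_source I M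
  have hfin : {p | (Function.support (χ p) ∩ K).Nonempty}.Finite :=
    χ.locallyFinite.finite_nonempty_inter_compact hK
  refine ⟨hfin.toFinset, fun p => χ p, fun p => (χ p).contMDiff, hχ, fun x hx => ?_⟩
  rw [← finsum_eq_sum_of_support_subset, χ.sum_eq_one (mem_univ x)]
  intro p hp
  rw [Finite.coe_toFinset]
  exact ⟨x, hp, hx⟩

variable {m : ℕ} {M : Type*} [TopologicalSpace M] [ChartedSpace (Euc m) M]
  [RiemannianBundle (fun x : M => TangentSpace (𝓡 m) x)] [IsManifold (𝓡 m) ∞ M]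
  [IsContMDiffRiemannianBundle (𝓡 m) ∞ (Euc m) (fun x : M => TangentSpace (𝓡 m) x)]
  [MeasurableSpace M] [BorelSpace M] [SigmaCompactSpace M] [T2Space M] {f : M → ℝ} {Ω : Set M}
  {X : ∀ x : M, TangentSpace (𝓡 m) x}

-- Both sides have the same integral against every test function.
lemma coordDiv_eqOn (hΩ : IsOpen Ω) (hX : IsC1FieldOn X Ω) (p q : M) :
    EqOn (coordDiv p X) (coordDiv q X)
      (Ω ∩ (chartAt (Euc m) p).source ∩ (chartAt (Euc m) q).source) := by
  have := isLocallyFiniteMeasure_rvol (m := m) (M := M)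
  have := isOpenPosMeasure_rvol (m := m) (M := M)
  have := ChartedSpace.secondCountable_of_sigmaCompact (Euc m) M
  set W := Ω ∩ (chartAt (Euc m) p).source ∩ (chartAt (Euc m) q).source
  have hW : IsOpen W :=
    (hΩ.inter (chartAt (Euc m) p).open_source).inter (chartAt (Euc m) q).open_source
  have hWp : W ⊆ Ω ∩ (chartAt (Euc m) p).source := inter_subset_left
  have hWq : W ⊆ Ω ∩ (chartAt (Euc m) q).source := fun x hx => ⟨hx.1.1, hx.2⟩
  have hp := (continuousOn_coordDiv hΩ hX p).mono hWp
  have hq := (continuousOn_coordDiv hΩ hX q).mono hWq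
  have hweak : ∀ᵐ x ∂(rvol m M), x ∈ W → coordDiv p X x - coordDiv q X x = 0 := by
    refine IsOpen.ae_eq_zero_of_integral_contMDiff_smul_eq_zero (𝓡 m) hW
      ((hp.sub hq).locallyIntegrableOn hW.measurableSet) fun g hg hgc hgs => ?_
    have hgl : ChartLipschitz m g :=
      chartLipschitz_of_contMDiffOn isOpen_univ (hg.of_le (by norm_cast)).contMDiffOn
        (subset_univ _)
    have hsub := integral_sub
      (integrable_mul_coordDiv_add_differential hΩ hX hgl hgc (hgs.trans hWp))
      (integrable_mul_coordDiv_add_differential hΩ hX hgl hgc (hgs.trans hWq))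
    rw [integral_mul_coordDiv_add_differential hΩ hX hgl hgc (hgs.trans hWp),
      integral_mul_coordDiv_add_differential hΩ hX hgl hgc (hgs.trans hWq), sub_zero] at hsub
    rw [← hsub]
    simp only [add_sub_add_right_eq_sub, ← mul_sub, smul_eq_mul]
  refine Measure.eqOn_open_of_ae_eq (μ := rvol m M) ?_ hW hp hq
  rw [EventuallyEq, ae_restrict_iff' hW.measurableSet]
  exact hweak.mono fun x hx hxW => sub_eq_zero.1 (hx hxW)

lemma rdiv_eqOn_coordDiv (hΩ : IsOpen Ω) (hX : IsC1FieldOn X Ω) (p : M) :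
    EqOn (rdiv X) (coordDiv p X) (Ω ∩ (chartAt (Euc m) p).source) := fun x hx =>
  coordDiv_eqOn hΩ hX x p ⟨⟨hx.1, mem_chart_source _ x⟩, hx.2⟩

lemma mul_rdiv_add_differential_eq (hΩ : IsOpen Ω) (hX : IsC1FieldOn X Ω) {p : M}
    (hs : tsupport f ⊆ Ω ∩ (chartAt (Euc m) p).source) (x : M) :
    f x * rdiv X x + differential f x (X x) = f x * coordDiv p X x + differential f x (X x) := by
  by_cases hx : x ∈ tsupport f
  · rw [rdiv_eqOn_coordDiv hΩ hX p (hs hx)]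
  · rw [image_eq_zero_of_notMem_tsupport hx, zero_mul, zero_mul]

theorem integrable_and_integral_mul_rdiv_add_differential_eq_zero (hΩ : IsOpen Ω)
    (hX : IsC1FieldOn X Ω) (hf : ChartLipschitz m f) (hc : HasCompactSupport f)
    (hs : tsupport f ⊆ Ω) :
    Integrable (fun x => f x * rdiv X x + differential f x (X x)) (rvol m M) ∧
      ∫ x, (f x * rdiv X x + differential f x (X x)) ∂(rvol m M) = 0 := by
  obtain ⟨s, χ, hχ, hχs, hone⟩ := exists_finset_partition_chartAt_source (𝓡 m) hc.isCompact
  let F : M → M → ℝ := fun p x => χ p x * f x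
  have hFs : ∀ p, tsupport (F p) ⊆ Ω ∩ (chartAt (Euc m) p).source := fun p x hx =>
    ⟨hs (tsupport_mul_subset_right hx), hχs p (tsupport_mul_subset_left hx)⟩
  have hFc : ∀ p, HasCompactSupport (F p) := fun p => hc.mul_left
  have hFl : ∀ p, ChartLipschitz m (F p) := fun p =>
    (chartLipschitz_of_contMDiffOn isOpen_univ
      ((hχ p).of_le (by norm_cast)).contMDiffOn (subset_univ _)).mul hf
  have hsum : ∑ p ∈ s, F p = f := by
    ext x
    by_cases hx : x ∈ tsupport f
    · simp only [F, Finset.sum_apply, ← Finset.sum_mul, hone x hx, one_mul]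
    · simp [F, image_eq_zero_of_notMem_tsupport hx]
  have hint : ∀ p, Integrable (fun x => F p x * rdiv X x + differential (F p) x (X x))
      (rvol m M) := fun p => by
    simp only [mul_rdiv_add_differential_eq hΩ hX (hFs p)]
    exact integrable_mul_coordDiv_add_differential hΩ hX (hFl p) (hFc p) (hFs p)
  have hzero : ∀ p, ∫ x, (F p x * rdiv X x + differential (F p) x (X x)) ∂(rvol m M) = 0 :=
    fun p => by
      simp only [mul_rdiv_add_differential_eq hΩ hX (hFs p)]
      exact integral_mul_coordDiv_add_differential hΩ hX (hFl p) (hFc p) (hFs p)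
  have hae : (fun x => ∑ p ∈ s, (F p x * rdiv X x + differential (F p) x (X x)))
      =ᵐ[rvol m M] fun x => f x * rdiv X x + differential f x (X x) := by
    filter_upwards [(Finset.eventually_all s).2 fun p _ => (hFl p).ae_mdifferentiableAt] with x hx
    rw [← hsum, differential_sum s hx, Finset.sum_add_distrib, ← Finset.sum_mul, Finset.sum_apply]
    congr 1
    exact (sum_apply s (fun p => differential (F p) x) (X x)).symm
  refine ⟨(integrable_finsetSum _ fun p _ => hint p).congr hae, ?_⟩
  rw [← integral_congr_ae hae, integral_finsetSum _ fun p _ => hint p]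
  exact Finset.sum_eq_zero fun p _ => hzero p

end DivergenceTheorem

section DifferentialCalculus

variable {m : ℕ} {M : Type*} [TopologicalSpace M] [ChartedSpace (Euc m) M] {f g : M → ℝ} {x : M}

lemma inner_rgrad [RiemannianBundle (fun x : M => TangentSpace (𝓡 m) x)] (f : M → ℝ) (x : M)
    (v : TangentSpace (𝓡 m) x) : inner ℝ (rgrad f x) v = differential f x v := by
  have : FiniteDimensional ℝ (TangentSpace (𝓡 m) x) :=
    inferInstanceAs (FiniteDimensional ℝ (Euc m))
  have : CompleteSpace (TangentSpace (𝓡 m) x) := FiniteDimensional.complete ℝ _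
  exact InnerProductSpace.toDual_symm_apply (𝕜 := ℝ) (E := TangentSpace (𝓡 m) x)

lemma differential_mul (hf : MDifferentiableAt (𝓡 m) 𝓘(ℝ, ℝ) f x)
    (hg : MDifferentiableAt (𝓡 m) 𝓘(ℝ, ℝ) g x) (v : Euc m) :
    differential (fun x => f x * g x) x v =
      f x * differential g x v + g x * differential f x v :=
  congrArg (fun L : Euc m →L[ℝ] ℝ => L v) (hf.hasMFDerivAt.mul hg.hasMFDerivAt).mfderiv

lemma differential_comp {F : ℝ → ℝ} {F' : ℝ} (hF : HasDerivAt F F' (f x))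
    (hf : MDifferentiableAt (𝓡 m) 𝓘(ℝ, ℝ) f x) (v : Euc m) :
    differential (F ∘ f) x v = F' * differential f x v := by
  have h := congrArg (fun L : Euc m →L[ℝ] ℝ => L v)
    (hF.hasFDerivAt.hasMFDerivAt.comp x hf.hasMFDerivAt).mfderiv
  exact h.trans (mul_comm _ _)

lemma differential_eq_zero_of_isLocalExtr [IsManifold (𝓡 m) ∞ M] (hf : IsLocalExtr f x)
    (hd : MDifferentiableAt (𝓡 m) 𝓘(ℝ, ℝ) f x) (v : Euc m) : differential f x v = 0 := by
  have hx := mem_chart_source (Euc m) x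
  have hinv := (chartAt (Euc m) x).left_inv hx
  have hextr : IsLocalExtr (f ∘ (chartAt (Euc m) x).symm) (chartAt (Euc m) x x) := by
    refine IsExtrFilter.comp_tendsto (l := 𝓝 x) (by rwa [hinv]) ?_
    have hcont := (chartAt (Euc m) x).symm.continuousAt ((chartAt (Euc m) x).map_source hx)
    rwa [ContinuousAt, hinv] at hcont
  rw [← symmDeriv_chartDeriv hx v]
  exact congrArg (fun L => L (chartDeriv x x v))
    (hextr.hasFDerivAt_eq_zero (hasFDerivAt_comp_chart_symm hx hd))

end DifferentialCalculus

section TruncatedWeight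

/-- The weight `e^{-h}` on `Ω`, truncated smoothly to the superlevel set `{ψ > γ}` and extended by
zero: the test function of the argument. -/
def truncWeight {M : Type*} (Ω : Set M) (ψ h : M → ℝ) (γ : ℝ) : M → ℝ :=
  Ω.indicator fun x => Real.smoothTransition (ψ x - γ) * Real.exp (-h x)

section Values

variable {M : Type*} {Ω : Set M} {ψ h : M → ℝ} {γ : ℝ} {x : M}

lemma truncWeight_nonneg (x : M) : 0 ≤ truncWeight Ω ψ h γ x :=
  indicator_nonneg (fun _ _ => mul_nonneg (Real.smoothTransition.nonneg _) (Real.exp_nonneg _)) x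

lemma ofReal_truncWeight_le_indicator (x : M) : ENNReal.ofReal (truncWeight Ω ψ h γ x) ≤
    Ω.indicator (fun x => ENNReal.ofReal (Real.exp (-h x))) x := by
  by_cases hx : x ∈ Ω
  · rw [truncWeight, indicator_of_mem hx, indicator_of_mem hx]
    exact ENNReal.ofReal_le_ofReal
      (mul_le_of_le_one_left (Real.exp_nonneg _) (Real.smoothTransition.le_one _))
  · simp [truncWeight, hx]

lemma truncWeight_pos (hx : x ∈ Ω) (hγ : γ < ψ x) : 0 < truncWeight Ω ψ h γ x := by
  rw [truncWeight, indicator_of_mem hx]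
  exact mul_pos (Real.smoothTransition.pos_of_pos (sub_pos.2 hγ)) (Real.exp_pos _)

lemma mem_and_lt_of_truncWeight_ne_zero (hx : truncWeight Ω ψ h γ x ≠ 0) : x ∈ Ω ∧ γ < ψ x := by
  rw [truncWeight, indicator_apply_ne_zero] at hx
  refine ⟨hx.1, lt_of_not_ge fun hle => left_ne_zero_of_mul (Function.mem_support.1 hx.2) ?_⟩
  exact Real.smoothTransition.zero_of_nonpos (sub_nonpos.2 hle)

lemma tsupport_truncWeight_subset [TopologicalSpace M] (hΩ : IsOpen Ω)
    (hψc : ContinuousOn ψ (closure Ω)) (hγ : ∀ x ∈ frontier Ω, ψ x < γ) :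
    tsupport (truncWeight Ω ψ h γ) ⊆ Ω := by
  have hsub : tsupport (truncWeight Ω ψ h γ) ⊆ closure Ω ∩ ψ ⁻¹' Ici γ := by
    refine closure_minimal (fun x hx => ?_)
      (hψc.preimage_isClosed_of_isClosed isClosed_closure isClosed_Ici)
    obtain ⟨hxΩ, hlt⟩ := mem_and_lt_of_truncWeight_ne_zero hx
    exact ⟨subset_closure hxΩ, hlt.le⟩
  intro x hx
  by_contra hxΩ
  exact (hγ x (hΩ.frontier_eq ▸ ⟨(hsub hx).1, hxΩ⟩)).not_ge (hsub hx).2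

end Values

variable {m : ℕ} {M : Type*} [TopologicalSpace M] [ChartedSpace (Euc m) M] {Ω : Set M}
  {ψ h b : M → ℝ} {γ : ℝ} {X : ∀ x : M, TangentSpace (𝓡 m) x}

lemma contMDiff_truncWeight (hΩ : IsOpen Ω) (hψ : ContMDiffOn (𝓡 m) 𝓘(ℝ, ℝ) 1 ψ Ω)
    (hψc : ContinuousOn ψ (closure Ω)) (hh : ContMDiffOn (𝓡 m) 𝓘(ℝ, ℝ) 1 h Ω)
    (hγ : ∀ x ∈ frontier Ω, ψ x < γ) :
    ContMDiff (𝓡 m) 𝓘(ℝ, ℝ) 1 (truncWeight Ω ψ h γ) := by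
  have hF : ContDiff ℝ 1 fun z : ℝ × ℝ => Real.smoothTransition (z.1 - γ) * Real.exp (-z.2) :=
    (Real.smoothTransition.contDiff.comp (contDiff_fst.sub contDiff_const)).mul
      (contDiff_snd.neg.exp)
  have hon : ContMDiffOn (𝓡 m) 𝓘(ℝ, ℝ) 1 (truncWeight Ω ψ h γ) Ω :=
    (hF.contMDiff.comp_contMDiffOn (hψ.prodMk_space hh)).congr fun x hx => indicator_of_mem hx _
  exact contMDiff_of_tsupport fun x hx =>
    hon.contMDiffAt (hΩ.mem_nhds (tsupport_truncWeight_subset hΩ hψc hγ hx))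

lemma differential_truncWeight (hΩ : IsOpen Ω) (hψ : ContMDiffOn (𝓡 m) 𝓘(ℝ, ℝ) 1 ψ Ω)
    (hh : ContMDiffOn (𝓡 m) 𝓘(ℝ, ℝ) 1 h Ω) {x : M} (hx : x ∈ Ω) (v : Euc m) :
    differential (truncWeight Ω ψ h γ) x v =
      deriv Real.smoothTransition (ψ x - γ) * Real.exp (-h x) * differential ψ x v
        - truncWeight Ω ψ h γ x * differential h x v := by
  have hψd := (hψ.contMDiffAt (hΩ.mem_nhds hx)).mdifferentiableAt one_ne_zero
  have hhd := (hh.contMDiffAt (hΩ.mem_nhds hx)).mdifferentiableAt one_ne_zero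
  have heq : truncWeight Ω ψ h γ =ᶠ[𝓝 x]
      fun x => Real.smoothTransition (ψ x - γ) * Real.exp (-h x) :=
    eventually_of_mem (hΩ.mem_nhds hx) fun z hz => indicator_of_mem hz _
  have hstep : HasDerivAt (fun t => Real.smoothTransition (t - γ))
      (deriv Real.smoothTransition (ψ x - γ)) (ψ x) :=
    ((Real.smoothTransition.contDiff (n := 1)).differentiable one_ne_zero _).hasDerivAt
      |>.comp_sub_const _ _
  have hexp : HasDerivAt (fun t => Real.exp (-t)) (Real.exp (-h x) * -1) (h x) :=
    (hasDerivAt_neg (h x)).exp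
  rw [differential, heq.mfderiv_eq]
  refine (differential_mul (hstep.differentiableAt.mdifferentiableAt.comp x hψd)
    (hexp.differentiableAt.mdifferentiableAt.comp x hhd) v).trans ?_
  rw [differential_comp hexp hhd, differential_comp hstep hψd, truncWeight, indicator_of_mem hx]
  simp only [Function.comp_apply]
  ring

lemma mul_truncWeight_le_mul_rdiv_add_differential
    [RiemannianBundle (fun x : M => TangentSpace (𝓡 m) x)] (hΩ : IsOpen Ω)
    (hψ : ContMDiffOn (𝓡 m) 𝓘(ℝ, ℝ) 1 ψ Ω) (hψc : ContinuousOn ψ (closure Ω))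
    (hh : ContMDiffOn (𝓡 m) 𝓘(ℝ, ℝ) 1 h Ω) (hγ : ∀ x ∈ frontier Ω, ψ x < γ)
    (hmon : ∀ x ∈ Ω, 0 ≤ inner ℝ (rgrad ψ x) (X x)) (hb0 : ∀ x, 0 ≤ b x)
    (hdiv : ∀ x ∈ Ω, b x * ψ x ≤ driftDiv h X x) (x : M) :
    γ * b x * truncWeight Ω ψ h γ x ≤
      truncWeight Ω ψ h γ x * rdiv X x + differential (truncWeight Ω ψ h γ) x (X x) := by
  by_cases hx : x ∈ Ω
  · have hmonx := hmon x hx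
    have hdivx := hdiv x hx
    rw [inner_rgrad] at hmonx
    rw [driftDiv, inner_rgrad] at hdivx
    have hslope : 0 ≤ deriv Real.smoothTransition (ψ x - γ) :=
      Real.smoothTransition.monotone.deriv_nonneg
    have hlevel : truncWeight Ω ψ h γ x * (γ * b x) ≤
        truncWeight Ω ψ h γ x * (rdiv X x - differential h x (X x)) := by
      rcases eq_or_ne (truncWeight Ω ψ h γ x) 0 with h0 | h0
      · rw [h0, zero_mul, zero_mul]
      · refine mul_le_mul_of_nonneg_left (le_trans ?_ hdivx) (truncWeight_nonneg x)
        rw [mul_comm]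
        exact mul_le_mul_of_nonneg_left (mem_and_lt_of_truncWeight_ne_zero h0).2.le (hb0 x)
    have htransport : 0 ≤ deriv Real.smoothTransition (ψ x - γ) * Real.exp (-h x) *
        differential ψ x (X x) := by positivity
    rw [show differential (truncWeight Ω ψ h γ) x (X x) = _ from
      differential_truncWeight hΩ hψ hh hx (X x)]
    linarith
  · have hxs : x ∉ tsupport (truncWeight Ω ψ h γ) := fun hs =>
      hx (tsupport_truncWeight_subset hΩ hψc hγ hs)
    rw [show truncWeight Ω ψ h γ x * rdiv X x + differential (truncWeight Ω ψ h γ) x (X x) = 0 from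
      mul_add_differential_eq_zero_of_notMem_tsupport hxs _ _, image_eq_zero_of_notMem_tsupport hxs,
      mul_zero]

end TruncatedWeight

section RadialCutoff

variable {M : Type*} [MetricSpace M] {o x : M} {R ε : ℝ}

/-- The radial cutoff equal to `1` on the ball of radius `R` and to `0` off that of radius
`R + ε`. -/
def radialCutoff (o : M) (R ε : ℝ) (x : M) : ℝ := max 0 (min 1 ((R + ε - dist o x) / ε))

lemma radialCutoff_nonneg (x : M) : 0 ≤ radialCutoff o R ε x := le_max_left _ _

lemma radialCutoff_le_one (x : M) : radialCutoff o R ε x ≤ 1 :=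
  max_le zero_le_one (min_le_left _ _)

lemma radialCutoff_eq_one (hε : 0 < ε) (hx : dist o x ≤ R) : radialCutoff o R ε x = 1 := by
  have : 1 ≤ (R + ε - dist o x) / ε := by rw [le_div_iff₀ hε]; linarith
  rw [radialCutoff, min_eq_left this, max_eq_right zero_le_one]

lemma radialCutoff_eq_zero (hε : 0 < ε) (hx : R + ε ≤ dist o x) : radialCutoff o R ε x = 0 := by
  have : (R + ε - dist o x) / ε ≤ 0 := div_nonpos_of_nonpos_of_nonneg (by linarith) hε.le
  rw [radialCutoff, max_eq_left (min_le_of_right_le this)]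

lemma lipschitzWith_radialCutoff (hε : 0 < ε) :
    LipschitzWith (Real.toNNReal ε⁻¹) (radialCutoff o R ε) := by
  refine (LipschitzWith.of_dist_le_mul fun x y => ?_).const_min 1 |>.const_max 0
  rw [Real.coe_toNNReal _ (by positivity), Real.dist_eq, ← sub_div, abs_div, abs_of_pos hε,
    div_eq_inv_mul, sub_sub_sub_cancel_left, dist_comm o y, dist_comm o x, dist_comm x y]
  gcongr
  exact abs_dist_sub_le y x o

lemma hasCompactSupport_radialCutoff [ProperSpace M] (hε : 0 < ε) :
    HasCompactSupport (radialCutoff o R ε) := by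
  refine HasCompactSupport.intro (isCompact_closedBall o (R + ε)) fun x hx => ?_
  rw [mem_closedBall, not_le, dist_comm] at hx
  exact radialCutoff_eq_zero hε hx.le

lemma isLocalExtr_radialCutoff (hε : 0 < ε) (hx : x ∉ ball o (R + ε) \ ball o R) :
    IsLocalExtr (radialCutoff o R ε) x := by
  by_cases hR : x ∈ ball o R
  · refine Or.inr (.of_forall fun z => ?_)
    rw [radialCutoff_eq_one hε (mem_ball'.1 hR).le]
    exact radialCutoff_le_one z
  · refine Or.inl (.of_forall fun z => ?_)
    have hRε : x ∉ ball o (R + ε) := fun h => hx ⟨h, hR⟩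
    rw [radialCutoff_eq_zero hε (not_lt.1 (mt mem_ball'.2 hRε))]
    exact radialCutoff_nonneg z

end RadialCutoff

section Flux

variable {m : ℕ} {M : Type*} [MetricSpace M] [ChartedSpace (Euc m) M] [IsManifold (𝓡 m) ∞ M]
  [RiemannianBundle (fun x : M => TangentSpace (𝓡 m) x)]
  [IsContMDiffRiemannianBundle (𝓡 m) ∞ (Euc m) (fun x : M => TangentSpace (𝓡 m) x)]
  [IsRiemannianManifold (𝓡 m) M] {o : M} {R ε k : ℝ} {Ω : Set M}
  {X : ∀ x : M, TangentSpace (𝓡 m) x} {ρ g φ : M → ℝ} {x : M}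

lemma chartLipschitz_of_locallyLipschitz (hφ : LocallyLipschitz φ) : ChartLipschitz m φ :=
  fun p => locallyLipschitzOn_comp hφ.locallyLipschitzOn (locallyLipschitzOn_chart_symm p)
    (mapsTo_univ _ _)

lemma abs_differential_radialCutoff_le (hε : 0 < ε)
    (hd : MDifferentiableAt (𝓡 m) 𝓘(ℝ, ℝ) (radialCutoff o R ε) x) {v : TangentSpace (𝓡 m) x}
    (hv : ‖v‖ ≤ k) :
    |differential (radialCutoff o R ε) x v| ≤
      (ball o (R + ε) \ ball o R).indicator (fun _ => k / ε) x := by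
  by_cases hx : x ∈ ball o (R + ε) \ ball o R
  · rw [indicator_of_mem hx]
    refine (abs_differential_le_of_lipschitzWith (lipschitzWith_radialCutoff hε) hd v).trans ?_
    rw [div_eq_inv_mul, Real.coe_toNNReal _ (by positivity)]
    gcongr
  · rw [indicator_of_notMem hx, show differential (radialCutoff o R ε) x v = 0 from
      differential_eq_zero_of_isLocalExtr (isLocalExtr_radialCutoff hε hx) hd _, abs_zero]

lemma radialCutoff_mul_sub_le_mul_rdiv_add_differential (hε : 0 < ε) (hρ0 : 0 ≤ ρ x)
    (hρ : MDifferentiableAt (𝓡 m) 𝓘(ℝ, ℝ) ρ x)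
    (hd : MDifferentiableAt (𝓡 m) 𝓘(ℝ, ℝ) (radialCutoff o R ε) x)
    (hXk : ρ x ≠ 0 → ‖X x‖ ≤ k) (hg : g x ≤ ρ x * rdiv X x + differential ρ x (X x)) :
    radialCutoff o R ε x * g x - k / ε * (ball o (R + ε) \ ball o R).indicator ρ x ≤
      radialCutoff o R ε x * ρ x * rdiv X x +
        differential (fun x => radialCutoff o R ε x * ρ x) x (X x) := by
  have hshell : -(k / ε * (ball o (R + ε) \ ball o R).indicator ρ x) ≤
      ρ x * differential (radialCutoff o R ε) x (X x) := by
    rcases eq_or_ne (ρ x) 0 with h0 | h0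
    · rw [h0, zero_mul, indicator_apply_eq_zero.2 fun _ => h0, mul_zero, neg_zero]
    · have hdiff := (abs_le.1 (abs_differential_radialCutoff_le hε hd (hXk h0))).1
      refine le_of_eq_of_le ?_ (mul_le_mul_of_nonneg_left hdiff hρ0)
      by_cases hx : x ∈ ball o (R + ε) \ ball o R
      · rw [indicator_of_mem hx, indicator_of_mem hx, mul_neg, mul_comm]
      · rw [indicator_of_notMem hx, indicator_of_notMem hx, neg_zero, mul_zero, mul_zero, neg_zero]
  have hcut := mul_le_mul_of_nonneg_left hg (radialCutoff_nonneg (o := o) (R := R) (ε := ε) x)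
  rw [show differential (fun x => radialCutoff o R ε x * ρ x) x (X x) = _ from
    differential_mul hd hρ (X x)]
  linarith

variable [ProperSpace M] [MeasurableSpace M] [BorelSpace M]

lemma integral_radialCutoff_mul_le (hΩ : IsOpen Ω) (hX : IsC1FieldOn X Ω)
    (hXk : ∀ x ∈ Ω, ‖X x‖ ≤ k) (hρ : ContMDiff (𝓡 m) 𝓘(ℝ, ℝ) 1 ρ) (hρ0 : ∀ x, 0 ≤ ρ x)
    (hρs : tsupport ρ ⊆ Ω) (hgc : Continuous g)
    (hg : ∀ x, g x ≤ ρ x * rdiv X x + differential ρ x (X x)) (hε : 0 < ε) :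
    ∫ x, radialCutoff o R ε x * g x ∂(rvol m M) ≤
      k / ε * ∫ x in ball o (R + ε) \ ball o R, ρ x ∂(rvol m M) := by
  have := isLocallyFiniteMeasure_rvol (m := m) (M := M)
  have hshell : MeasurableSet (ball o (R + ε) \ ball o R) :=
    measurableSet_ball.diff measurableSet_ball
  have hcutl := lipschitzWith_radialCutoff (o := o) (R := R) hε
  have hcutc := hasCompactSupport_radialCutoff (o := o) (R := R) hε
  have hcutChart : ChartLipschitz m (radialCutoff o R ε) :=
    chartLipschitz_of_locallyLipschitz hcutl.locallyLipschitz
  obtain ⟨hint, hzero⟩ := integrable_and_integral_mul_rdiv_add_differential_eq_zero hΩ hX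
    (hcutChart.mul (chartLipschitz_of_contMDiffOn isOpen_univ hρ.contMDiffOn (subset_univ _)))
    hcutc.mul_right (tsupport_mul_subset_right.trans hρs)
  have hintg : Integrable (fun x => radialCutoff o R ε x * g x) (rvol m M) :=
    (hcutl.continuous.mul hgc).integrable_of_hasCompactSupport hcutc.mul_right
  have hintρ : Integrable (fun x => k / ε * (ball o (R + ε) \ ball o R).indicator ρ x)
      (rvol m M) := by
    refine Integrable.const_mul ((integrable_indicator_iff hshell).2 ?_) _
    exact (hρ.continuous.continuousOn.integrableOn_compact
      (isCompact_closedBall o (R + ε))).mono_set (sdiff_subset.trans ball_subset_closedBall)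
  have hle := integral_mono_ae (hintg.sub hintρ) hint <| by
    filter_upwards [hcutChart.ae_mdifferentiableAt] with x hd
    exact radialCutoff_mul_sub_le_mul_rdiv_add_differential hε (hρ0 x)
      (hρ.mdifferentiableAt one_ne_zero) hd
      (fun h0 => hXk x (hρs (subset_tsupport ρ h0))) (hg x)
  rw [hzero] at hle
  simp only [Pi.sub_apply] at hle
  rwa [integral_sub hintg hintρ, integral_const_mul, integral_indicator hshell, sub_nonpos] at hle

theorem mul_setIntegral_ball_le_of_le_mul_rdiv_add_differential (hΩ : IsOpen Ω)
    (hX : IsC1FieldOn X Ω) (hXk : ∀ x ∈ Ω, ‖X x‖ ≤ k) (hρ : ContMDiff (𝓡 m) 𝓘(ℝ, ℝ) 1 ρ)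
    (hρ0 : ∀ x, 0 ≤ ρ x) (hρs : tsupport ρ ⊆ Ω) (hgc : Continuous g) (hg0 : ∀ x, 0 ≤ g x)
    (hg : ∀ x, g x ≤ ρ x * rdiv X x + differential ρ x (X x)) (hε : 0 < ε) :
    ε * ∫ x in ball o R, g x ∂(rvol m M) ≤
      k * ∫ x in ball o (R + ε) \ ball o R, ρ x ∂(rvol m M) := by
  have := isLocallyFiniteMeasure_rvol (m := m) (M := M)
  have hcut : ∫ x in ball o R, g x ∂(rvol m M) ≤
      ∫ x, radialCutoff o R ε x * g x ∂(rvol m M) := by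
    have heq : EqOn g (fun x => radialCutoff o R ε x * g x) (ball o R) := fun x hx => by
      simp [radialCutoff_eq_one hε (mem_ball'.1 hx).le]
    rw [setIntegral_congr_fun measurableSet_ball heq]
    exact setIntegral_le_integral (((lipschitzWith_radialCutoff hε).continuous.mul
      hgc).integrable_of_hasCompactSupport (hasCompactSupport_radialCutoff hε).mul_right)
      (.of_forall fun x => mul_nonneg (radialCutoff_nonneg x) (hg0 x))
  rw [← le_div_iff₀' hε, mul_div_right_comm]
  exact hcut.trans (integral_radialCutoff_mul_le hΩ hX hXk hρ hρ0 hρs hgc hg hε)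

end Flux

section DiscreteGronwall

lemma mul_pow_le_of_forall_mul_le {u : ℝ → ℝ} {R ε q : ℝ} (hε : 0 ≤ ε) (hq : 0 ≤ q)
    (hstep : ∀ T, R ≤ T → u T * q ≤ u (T + ε)) (n : ℕ) : u R * q ^ n ≤ u (R + n * ε) := by
  induction n with
  | zero => simp
  | succ n ih =>
    calc u R * q ^ (n + 1) = u R * q ^ n * q := by ring
      _ ≤ u (R + n * ε) * q := mul_le_mul_of_nonneg_right ih hq
      _ ≤ u (R + n * ε + ε) := hstep _ (le_add_of_nonneg_right (by positivity))
      _ = u (R + (n + 1 : ℕ) * ε) := by push_cast; ring_nf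

-- Iterating over `n` steps of length `(S - R) / n` loses only a factor `1 - O(1 / n)`.
lemma monotoneOn_of_mul_one_sub_mul_sq_le {u : ℝ → ℝ} {R₁ C : ℝ} (hu : ∀ R, R₁ ≤ R → 0 ≤ u R)
    (hstep : ∀ R, R₁ ≤ R → ∀ ε, 0 < ε → u R * (1 - C * ε ^ 2) ≤ u (R + ε)) :
    MonotoneOn u (Ici R₁) := by
  intro R hR S _ hRS
  rcases hRS.eq_or_lt with rfl | hlt
  · exact le_rfl
  have hquot := tendsto_const_div_atTop_nhds_zero_nat (S - R)
  have hdefect : Tendsto (fun n : ℕ => C * ((S - R) / n) ^ 2) atTop (𝓝 0) := by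
    simpa using (hquot.pow 2).const_mul C
  have hlim : Tendsto (fun n : ℕ => u R * (1 - C * (S - R) * ((S - R) / n))) atTop (𝓝 (u R)) := by
    simpa using ((hquot.const_mul (C * (S - R))).const_sub 1).const_mul (u R)
  refine le_of_tendsto hlim ?_
  filter_upwards [eventually_gt_atTop 0, hdefect.eventually_lt_const one_pos] with n hn hlt1
  have hn' : (0 : ℝ) < n := Nat.cast_pos.2 hn
  set ε := (S - R) / n
  have hnε : n * ε = S - R := mul_div_cancel₀ _ hn'.ne'
  have hε : 0 < ε := div_pos (sub_pos.2 hlt) hn'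
  have hbernoulli := one_add_mul_le_pow (show -2 ≤ -(C * ε ^ 2) by linarith) n
  calc u R * (1 - C * (S - R) * ε) = u R * (1 + n * -(C * ε ^ 2)) := by rw [← hnε]; ring
    _ ≤ u R * (1 + -(C * ε ^ 2)) ^ n := mul_le_mul_of_nonneg_left hbernoulli (hu R hR)
    _ ≤ u (R + n * ε) := mul_pow_le_of_forall_mul_le hε.le (by linarith)
        (fun T hT => hstep T (le_trans hR hT) ε hε) n
    _ = u S := by rw [hnε, add_sub_cancel]

lemma monotoneOn_mul_exp_neg_of_increment_le {H A a : ℝ → ℝ} {R₁ a₁ : ℝ}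
    (hH : ∀ R, R₁ ≤ R → 0 ≤ H R) (ha0 : ∀ R, R₁ ≤ R → 0 ≤ a R) (ha : ∀ R, R₁ ≤ R → a R ≤ a₁)
    (hA : ∀ R, R₁ ≤ R → ∀ ε, 0 < ε → A (R + ε) ≤ A R + ε * a R)
    (hinc : ∀ R, R₁ ≤ R → ∀ ε, 0 < ε → ε * a R * H R ≤ H (R + ε) - H R) :
    MonotoneOn (fun R => H R * Real.exp (-A R)) (Ici R₁) := by
  refine monotoneOn_of_mul_one_sub_mul_sq_le (C := a₁ ^ 2)
    (fun R hR => mul_nonneg (hH R hR) (Real.exp_nonneg _)) fun R hR ε hε => ?_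
  have ht0 : 0 ≤ ε * a R := mul_nonneg hε.le (ha0 R hR)
  have hsq : (ε * a R) ^ 2 ≤ a₁ ^ 2 * ε ^ 2 := by
    rw [← mul_pow, mul_comm a₁]
    exact pow_le_pow_left₀ ht0 (mul_le_mul_of_nonneg_left (ha R hR) hε.le) 2
  have hfactor : 1 - a₁ ^ 2 * ε ^ 2 ≤ (1 + ε * a R) * Real.exp (-(ε * a R)) := by
    nlinarith [Real.one_sub_le_exp_neg (ε * a R)]
  have hHstep : H R * (1 + ε * a R) ≤ H (R + ε) := by linarith [hinc R hR ε hε]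
  have hexp : Real.exp (-A R) * Real.exp (-(ε * a R)) ≤ Real.exp (-A (R + ε)) := by
    rw [← Real.exp_add]
    exact Real.exp_le_exp.2 (by linarith [hA R hR ε hε])
  calc H R * Real.exp (-A R) * (1 - a₁ ^ 2 * ε ^ 2)
      ≤ H R * Real.exp (-A R) * ((1 + ε * a R) * Real.exp (-(ε * a R))) :=
        mul_le_mul_of_nonneg_left hfactor (mul_nonneg (hH R hR) (Real.exp_nonneg _))
    _ = (H R * (1 + ε * a R)) * (Real.exp (-A R) * Real.exp (-(ε * a R))) := by ring
    _ ≤ H (R + ε) * Real.exp (-A (R + ε)) := mul_le_mul hHstep hexp (by positivity)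
        (hH _ (hR.trans (le_add_of_nonneg_right hε.le)))

end DiscreteGronwall

section RadialGrowth

variable {μ c R : ℝ}

/-- The primitive of `R ^ (-μ)`, against which the parameter `c^w_μ` measures volume growth. -/
def radialGrowth (μ R : ℝ) : ℝ := if μ = 1 then Real.log R else R ^ (1 - μ) / (1 - μ)

lemma radialGrowth_add_le (hμ : μ ∈ Icc (0 : ℝ) 1) {ε : ℝ} (hR : 0 < R) (hε : 0 < ε) :
    radialGrowth μ (R + ε) ≤ radialGrowth μ R + ε * R ^ (-μ) := by
  have hfac : R + ε = R * (1 + ε / R) := by field_simp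
  by_cases h1 : μ = 1
  · simp only [radialGrowth, h1, if_true]
    rw [hfac, Real.log_mul hR.ne' (by positivity), Real.rpow_neg_one, ← div_eq_mul_inv]
    linarith [Real.log_le_sub_one_of_pos (show 0 < 1 + ε / R by positivity)]
  · have hs : 0 < 1 - μ := sub_pos.2 (lt_of_le_of_ne hμ.2 h1)
    have hbernoulli := rpow_one_add_le_one_add_mul_self (s := ε / R) (p := 1 - μ)
      (by linarith [div_pos hε hR]) hs.le (by linarith [hμ.1])
    have hpow : R ^ (1 - μ) = R * R ^ (-μ) := by
      rw [sub_eq_add_neg, Real.rpow_add hR, Real.rpow_one]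
    simp only [radialGrowth, h1, if_false]
    calc (R + ε) ^ (1 - μ) / (1 - μ) = R ^ (1 - μ) * (1 + ε / R) ^ (1 - μ) / (1 - μ) := by
          rw [hfac, Real.mul_rpow hR.le (by positivity)]
      _ ≤ R ^ (1 - μ) * (1 + (1 - μ) * (ε / R)) / (1 - μ) := by gcongr
      _ = R ^ (1 - μ) / (1 - μ) + ε * R ^ (-μ) := by rw [hpow]; field_simp

lemma tendsto_radialGrowth_atTop (hμ : μ ≤ 1) : Tendsto (radialGrowth μ) atTop atTop := by
  rcases hμ.eq_or_lt with rfl | hlt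
  · exact Real.tendsto_log_atTop.congr fun R => by rw [radialGrowth, if_pos rfl]
  · refine ((tendsto_rpow_atTop (sub_pos.2 hlt)).atTop_div_const (sub_pos.2 hlt)).congr fun R => ?_
    rw [radialGrowth, if_neg hlt.ne]

lemma exists_exp_add_mul_radialGrowth_le (hμ : μ ∈ Icc (0 : ℝ) 1) (hc : 0 ≤ c) {H : ℝ → ℝ}
    {R₁ : ℝ} (hR₁ : 1 ≤ R₁) (hH : ∀ R, R₁ ≤ R → 0 ≤ H R) (hpos : 0 < H R₁)
    (hinc : ∀ R, R₁ ≤ R → ∀ ε, 0 < ε → ε * (c * R ^ (-μ)) * H R ≤ H (R + ε) - H R) :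
    ∃ C, ∀ R, R₁ ≤ R → Real.exp (C + c * radialGrowth μ R) ≤ H R := by
  have hmono : MonotoneOn (fun R => H R * Real.exp (-(c * radialGrowth μ R))) (Ici R₁) := by
    refine monotoneOn_mul_exp_neg_of_increment_le (a₁ := c) hH
      (fun R hR => mul_nonneg hc (Real.rpow_nonneg (by linarith) _)) (fun R hR => ?_)
      (fun R hR ε hε => ?_) hinc
    · exact mul_le_of_le_one_right hc
        (Real.rpow_le_one_of_one_le_of_nonpos (hR₁.trans hR) (neg_nonpos.2 hμ.1))
    · linarith [mul_le_mul_of_nonneg_left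
        (radialGrowth_add_le hμ (show 0 < R by linarith) hε) hc]
  refine ⟨Real.log (H R₁) - c * radialGrowth μ R₁, fun R hR => ?_⟩
  rw [Real.exp_add, ← le_div_iff₀ (Real.exp_pos _), div_eq_mul_inv, ← Real.exp_neg, sub_eq_add_neg,
    Real.exp_add, Real.exp_log hpos]
  exact hmono self_mem_Ici hR hR

end RadialGrowth

section WeightedParameter

variable {M : Type*} [MetricSpace M] {o : M} {μ : ℝ}

lemma exists_mul_rpow_neg_le_of_condB {β β' : ℝ} {b : M → ℝ} (hB : CondB o μ β b) (hβ : β' < β) :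
    ∃ R₀, ∀ x, R₀ ≤ dist o x → β' * dist o x ^ (-μ) ≤ b x := by
  by_cases h0 : μ = 0
  · simp only [CondB, h0, if_true] at hB
    exact ⟨1, fun x _ => by simpa [h0] using hβ.le.trans (hB x)⟩
  · simp only [CondB, h0, if_false] at hB
    have hev := eventually_lt_of_lt_liminf ((EReal.coe_lt_coe_iff.2 hβ).trans_le hB)
    obtain ⟨R₀, hR₀⟩ := eventually_atTop.1 (eventually_comap.1 hev)
    refine ⟨max R₀ 1, fun x hx => ?_⟩
    have hpos : 0 < dist o x := one_pos.trans_le ((le_max_right _ _).trans hx)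
    rw [Real.rpow_neg hpos.le, ← div_eq_mul_inv, div_le_iff₀' (Real.rpow_pos_of_pos hpos _)]
    exact (EReal.coe_lt_coe_iff.1 (hR₀ _ ((le_max_left _ _).trans hx) x rfl)).le

variable [MeasurableSpace M] {vol : Measure M} {w : M → ℝ} {Ω : Set M}

lemma cw_eq_liminf_log_div_radialGrowth :
    cw vol o μ w Ω = liminf (fun R : ℝ =>
      ENNReal.log (∫⁻ x in ball o R ∩ Ω, ENNReal.ofReal (w x) ∂vol) / (radialGrowth μ R : EReal))
      atTop := by
  by_cases h1 : μ = 1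
  · simp only [cw, radialGrowth, h1, if_true]
  · simp only [cw, radialGrowth, h1, if_false]
    refine congrArg (liminf · atTop) (funext fun R => ?_)
    rw [mul_comm, ← EReal.mul_div, ← EReal.coe_div, EReal.div_eq_inv_mul, mul_comm,
      ← EReal.coe_inv, inv_div]

lemma coe_le_cw_of_exp_le (hμ : μ ≤ 1) {c C R₁ : ℝ}
    (h : ∀ R, R₁ ≤ R → ENNReal.ofReal (Real.exp (C + c * radialGrowth μ R)) ≤
      ∫⁻ x in ball o R ∩ Ω, ENNReal.ofReal (w x) ∂vol) :
    (c : EReal) ≤ cw vol o μ w Ω := by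
  have hgrow := tendsto_radialGrowth_atTop hμ
  have hlim : Tendsto (fun R => (((C + c * radialGrowth μ R) / radialGrowth μ R : ℝ) : EReal))
      atTop (𝓝 (c : EReal)) := by
    refine (continuous_coe_real_ereal.tendsto c).comp ?_
    have hsum := (hgrow.const_div_atTop C).add_const c
    rw [zero_add] at hsum
    refine hsum.congr' ?_
    filter_upwards [hgrow.eventually_gt_atTop 0] with R hR
    rw [add_div, mul_div_cancel_right₀ _ hR.ne']
  rw [cw_eq_liminf_log_div_radialGrowth, ← hlim.liminf_eq]
  refine liminf_le_liminf ?_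
  filter_upwards [eventually_ge_atTop R₁, hgrow.eventually_gt_atTop 0] with R hR hpos
  have hlog := ENNReal.log_monotone (h R hR)
  rw [ENNReal.log_ofReal_of_pos (Real.exp_pos _), Real.log_exp] at hlog
  rw [EReal.coe_div]
  exact EReal.div_le_div_right_of_nonneg (EReal.coe_nonneg.2 hpos.le) hlog

lemma cw_nonneg [OpensMeasurableSpace M] [vol.IsOpenPosMeasure] (hμ : μ ≤ 1) (hΩ : IsOpen Ω)
    (hΩne : Ω.Nonempty) (hw : AEMeasurable w (vol.restrict Ω)) (hwpos : ∀ x ∈ Ω, 0 < w x) :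
    0 ≤ cw vol o μ w Ω := by
  obtain ⟨x₀, hx₀⟩ := hΩne
  have hU : IsOpen (ball o (dist x₀ o + 1) ∩ Ω) := isOpen_ball.inter hΩ
  have hpos : 0 < ∫⁻ x in ball o (dist x₀ o + 1) ∩ Ω, ENNReal.ofReal (w x) ∂vol := by
    rw [pos_iff_ne_zero, Ne, lintegral_eq_zero_iff'
      (hw.mono_measure (Measure.restrict_mono inter_subset_right le_rfl)).ennreal_ofReal,
      EventuallyEq, ae_restrict_iff' hU.measurableSet]
    refine fun hae => hU.measure_ne_zero vol ⟨x₀, mem_ball.2 (lt_add_one _), hx₀⟩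
      (measure_mono_null (fun x hx => ?_) (ae_iff.1 hae))
    exact fun hzero => (ENNReal.ofReal_pos.2 (hwpos x hx.2)).ne' (hzero hx)
  obtain ⟨t, ht0, ht⟩ := ENNReal.lt_iff_exists_nnreal_btwn.1 hpos
  rw [← EReal.coe_zero]
  refine coe_le_cw_of_exp_le hμ (C := Real.log t) (R₁ := dist x₀ o + 1) fun R hR => ?_
  rw [zero_mul, add_zero, Real.exp_log (by exact_mod_cast ht0), ENNReal.ofReal_coe_nnreal]
  exact ht.le.trans (lintegral_mono_set (inter_subset_inter_left _ (ball_subset_ball hR)))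

end WeightedParameter

section FluxGrowth

variable {M : Type*} [MetricSpace M] [ProperSpace M] [MeasurableSpace M] [OpensMeasurableSpace M]
  {vol : Measure M} [IsLocallyFiniteMeasure vol] {o : M} {μ k c R₀ : ℝ} {f ρ g : M → ℝ}

lemma integrableOn_ball_of_continuous (hf : Continuous f) (R : ℝ) :
    IntegrableOn f (ball o R) vol :=
  (hf.continuousOn.integrableOn_compact (isCompact_closedBall o R)).mono_set
    ball_subset_closedBall

lemma mul_rpow_neg_mul_setIntegral_ball_diff_le (hμ : 0 ≤ μ) (hc : 0 ≤ c) (hR₀ : 0 < R₀)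
    (hρ : Continuous ρ) (hρ0 : ∀ x, 0 ≤ ρ x) (hg : Continuous g) (hg0 : ∀ x, 0 ≤ g x)
    (hlow : ∀ x, R₀ ≤ dist o x → c * dist o x ^ (-μ) * ρ x ≤ g x) (R : ℝ) :
    c * R ^ (-μ) * ∫ x in ball o R \ ball o R₀, ρ x ∂vol ≤ ∫ x in ball o R, g x ∂vol := by
  rw [← integral_const_mul]
  calc ∫ x in ball o R \ ball o R₀, c * R ^ (-μ) * ρ x ∂vol
      ≤ ∫ x in ball o R \ ball o R₀, g x ∂vol := by
        refine setIntegral_mono_on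
          (((integrableOn_ball_of_continuous hρ R).mono_set sdiff_subset).const_mul _)
          ((integrableOn_ball_of_continuous hg R).mono_set sdiff_subset)
          (measurableSet_ball.diff measurableSet_ball) fun x hx => ?_
        have hxR : dist o x < R := mem_ball'.1 hx.1
        have hxR₀ : R₀ ≤ dist o x := not_lt.1 fun hlt => hx.2 (mem_ball'.2 hlt)
        refine le_trans (mul_le_mul_of_nonneg_right ?_ (hρ0 x)) (hlow x hxR₀)
        exact mul_le_mul_of_nonneg_left
          (Real.rpow_le_rpow_of_nonpos (hR₀.trans_le hxR₀) hxR.le (neg_nonpos.2 hμ)) hc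
    _ ≤ ∫ x in ball o R, g x ∂vol :=
        setIntegral_mono_set (integrableOn_ball_of_continuous hg R) (.of_forall hg0)
          sdiff_subset.eventuallyLE

lemma setIntegral_ball_pos [vol.IsOpenPosMeasure] (hg : Continuous g) (hg0 : ∀ x, 0 ≤ g x)
    {x₀ : M} (hx₀ : 0 < g x₀) {R : ℝ} (hR : x₀ ∈ ball o R) : 0 < ∫ x in ball o R, g x ∂vol := by
  rw [setIntegral_pos_iff_support_of_nonneg_ae (.of_forall hg0)
    (integrableOn_ball_of_continuous hg R)]
  exact (hg.isOpen_support.inter isOpen_ball).measure_pos vol ⟨x₀, hx₀.ne', hR⟩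

lemma mul_setIntegral_ball_diff_le_sub_of_flux (hμ : 0 ≤ μ) (hk : 0 < k) (hc : 0 ≤ c)
    (hR₀ : 0 < R₀) (hρ : Continuous ρ) (hρ0 : ∀ x, 0 ≤ ρ x) (hg : Continuous g)
    (hg0 : ∀ x, 0 ≤ g x) (hlow : ∀ x, R₀ ≤ dist o x → c * k * dist o x ^ (-μ) * ρ x ≤ g x)
    {R ε : ℝ} (hR : R₀ ≤ R) (hε : 0 < ε)
    (hflux : ε * ∫ x in ball o R, g x ∂vol ≤ k * ∫ x in ball o (R + ε) \ ball o R, ρ x ∂vol) :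
    ε * (c * R ^ (-μ)) * ∫ x in ball o R \ ball o R₀, ρ x ∂vol ≤
      ∫ x in ball o (R + ε) \ ball o R₀, ρ x ∂vol - ∫ x in ball o R \ ball o R₀, ρ x ∂vol := by
  have hdiff : ∀ {S T}, S ≤ T → ∫ x in ball o T \ ball o S, ρ x ∂vol =
      ∫ x in ball o T, ρ x ∂vol - ∫ x in ball o S, ρ x ∂vol := fun hST =>
    setIntegral_sdiff measurableSet_ball (integrableOn_ball_of_continuous hρ _)
      (ball_subset_ball hST)
  have hshell : ∫ x in ball o (R + ε) \ ball o R, ρ x ∂vol =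
      ∫ x in ball o (R + ε) \ ball o R₀, ρ x ∂vol - ∫ x in ball o R \ ball o R₀, ρ x ∂vol := by
    rw [hdiff (by linarith), hdiff (by linarith), hdiff hR, sub_sub_sub_cancel_right]
  have hbelow := mul_rpow_neg_mul_setIntegral_ball_diff_le (vol := vol) hμ
    (mul_nonneg hc hk.le) hR₀ hρ hρ0 hg hg0 hlow R
  rw [← hshell]
  refine le_of_mul_le_mul_left ?_ hk
  calc k * (ε * (c * R ^ (-μ)) * ∫ x in ball o R \ ball o R₀, ρ x ∂vol)
      = ε * (c * k * R ^ (-μ) * ∫ x in ball o R \ ball o R₀, ρ x ∂vol) := by ring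
    _ ≤ ε * ∫ x in ball o R, g x ∂vol := mul_le_mul_of_nonneg_left hbelow hε.le
    _ ≤ k * ∫ x in ball o (R + ε) \ ball o R, ρ x ∂vol := hflux

lemma exists_exp_le_setIntegral_ball_of_flux [vol.IsOpenPosMeasure] (hμ : μ ∈ Icc (0 : ℝ) 1)
    (hk : 0 < k) (hc : 0 ≤ c) (hρ : Continuous ρ) (hρ0 : ∀ x, 0 ≤ ρ x) (hg : Continuous g)
    (hg0 : ∀ x, 0 ≤ g x) (hgpos : ∃ x, 0 < g x)
    (hlow : ∀ x, R₀ ≤ dist o x → c * k * dist o x ^ (-μ) * ρ x ≤ g x)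
    (hflux : ∀ R ε : ℝ, 0 < ε →
      ε * ∫ x in ball o R, g x ∂vol ≤ k * ∫ x in ball o (R + ε) \ ball o R, ρ x ∂vol) :
    ∃ C R₁, ∀ R, R₁ ≤ R →
      Real.exp (C + c * radialGrowth μ R) ≤ ∫ x in ball o R, ρ x ∂vol := by
  obtain ⟨x₀, hx₀⟩ := hgpos
  set S := max (max R₀ 1) (dist x₀ o + 1)
  have hS1 : 1 ≤ S := (le_max_right _ _).trans (le_max_left _ _)
  have hSR₀ : R₀ ≤ S := (le_max_left _ _).trans (le_max_left _ _)
  have hx₀S : x₀ ∈ ball o S := mem_ball.2 ((lt_add_one _).trans_le (le_max_right _ _))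
  have hpos : 0 < ∫ x in ball o (S + 1) \ ball o S, ρ x ∂vol := by
    have hfirst := (setIntegral_ball_pos hg hg0 hx₀ hx₀S).trans_le
      ((one_mul _).symm.trans_le (hflux S 1 one_pos))
    exact pos_of_mul_pos_right hfirst hk.le
  obtain ⟨C, hC⟩ := exists_exp_add_mul_radialGrowth_le (R₁ := S + 1)
    (H := fun R => ∫ x in ball o R \ ball o S, ρ x ∂vol) hμ hc (by linarith)
    (fun R _ => integral_nonneg hρ0) hpos fun R hR ε hε =>
      mul_setIntegral_ball_diff_le_sub_of_flux hμ.1 hk hc (one_pos.trans_le hS1) hρ hρ0 hg hg0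
        (fun x hx => hlow x (hSR₀.trans hx)) (by linarith) hε (hflux R ε hε)
  refine ⟨C, S + 1, fun R hR => (hC R hR).trans ?_⟩
  exact setIntegral_mono_set (integrableOn_ball_of_continuous hρ R) (.of_forall hρ0)
    sdiff_subset.eventuallyLE

lemma coe_le_cw_of_exp_le_setIntegral_ball (hμ : μ ≤ 1) {Ω : Set M} (hΩ : MeasurableSet Ω)
    {w : M → ℝ} (hρ : Continuous ρ) (hρ0 : ∀ x, 0 ≤ ρ x)
    (hρw : ∀ x, ENNReal.ofReal (ρ x) ≤ Ω.indicator (fun x => ENNReal.ofReal (w x)) x) {C R₁ : ℝ}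
    (hexp : ∀ R, R₁ ≤ R → Real.exp (C + c * radialGrowth μ R) ≤ ∫ x in ball o R, ρ x ∂vol) :
    (c : EReal) ≤ cw vol o μ w Ω := by
  refine coe_le_cw_of_exp_le hμ (C := C) (R₁ := R₁) fun R hR => ?_
  calc ENNReal.ofReal (Real.exp (C + c * radialGrowth μ R))
      ≤ ENNReal.ofReal (∫ x in ball o R, ρ x ∂vol) := ENNReal.ofReal_le_ofReal (hexp R hR)
    _ = ∫⁻ x in ball o R, ENNReal.ofReal (ρ x) ∂vol :=
        ofReal_integral_eq_lintegral_ofReal (integrableOn_ball_of_continuous hρ R)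
          (.of_forall hρ0)
    _ ≤ ∫⁻ x in ball o R, Ω.indicator (fun x => ENNReal.ofReal (w x)) x ∂vol :=
        lintegral_mono hρw
    _ ≤ ∫⁻ x in ball o R ∩ Ω, ENNReal.ofReal (w x) ∂vol := by
        rw [inter_comm, ← Measure.restrict_restrict hΩ]
        exact lintegral_indicator_le _ _

end FluxGrowth

section MaximumPrinciple

variable {m : ℕ} {M : Type*} [MetricSpace M] [ChartedSpace (Euc m) M] [IsManifold (𝓡 m) ∞ M]
  [RiemannianBundle (fun x : M => TangentSpace (𝓡 m) x)]
  [IsContMDiffRiemannianBundle (𝓡 m) ∞ (Euc m) (fun x : M => TangentSpace (𝓡 m) x)]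
  [IsRiemannianManifold (𝓡 m) M] [ProperSpace M] [MeasurableSpace M] [BorelSpace M]
  {o x₀ : M} {Ω : Set M} {X : ∀ x : M, TangentSpace (𝓡 m) x} {b ψ h : M → ℝ} {k μ β γ c : ℝ}

lemma coe_le_cw_of_lt_of_forall_frontier_lt (hΩ : IsOpen Ω) (hX : IsC1FieldOn X Ω) (hk : 0 < k)
    (hXk : ∀ x ∈ Ω, ‖X x‖ ≤ k) (hμ : μ ∈ Icc (0 : ℝ) 1) (hb : Continuous b)
    (hbpos : ∀ x, 0 < b x) (hB : CondB o μ β b) (hψ : ContMDiffOn (𝓡 m) 𝓘(ℝ, ℝ) 1 ψ Ω)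
    (hψc : ContinuousOn ψ (closure Ω)) (hmon : ∀ x ∈ Ω, 0 ≤ inner ℝ (rgrad ψ x) (X x))
    (hh : ContMDiffOn (𝓡 m) 𝓘(ℝ, ℝ) 1 h Ω) (hdiv : ∀ x ∈ Ω, b x * ψ x ≤ driftDiv h X x)
    (hγ0 : 0 < γ) (hγ : ∀ x ∈ frontier Ω, ψ x < γ) (hx₀ : x₀ ∈ Ω) (hγx₀ : γ < ψ x₀)
    (hc0 : 0 ≤ c) (hc : c * k < γ * β) :
    (c : EReal) ≤ cw (rvol m M) o μ (fun x => Real.exp (-h x)) Ω := by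
  have := isLocallyFiniteMeasure_rvol (m := m) (M := M)
  have := isOpenPosMeasure_rvol (m := m) (M := M)
  set ρ := truncWeight Ω ψ h γ
  have hρ : ContMDiff (𝓡 m) 𝓘(ℝ, ℝ) 1 ρ := contMDiff_truncWeight hΩ hψ hψc hh hγ
  set g : M → ℝ := fun x => γ * b x * ρ x
  have hg : Continuous g := (continuous_const.mul hb).mul hρ.continuous
  have hg0 : ∀ x, 0 ≤ g x := fun x =>
    mul_nonneg (mul_nonneg hγ0.le (hbpos x).le) (truncWeight_nonneg x)
  have hgx₀ : 0 < g x₀ := mul_pos (mul_pos hγ0 (hbpos x₀)) (truncWeight_pos hx₀ hγx₀)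
  have hcβ : c * k / γ < β := by rwa [div_lt_iff₀' hγ0]
  obtain ⟨R₀, hR₀⟩ := exists_mul_rpow_neg_le_of_condB hB hcβ
  have hlow : ∀ x, R₀ ≤ dist o x → c * k * dist o x ^ (-μ) * ρ x ≤ g x := fun x hx => by
    refine mul_le_mul_of_nonneg_right ?_ (truncWeight_nonneg x)
    calc c * k * dist o x ^ (-μ) = γ * (c * k / γ * dist o x ^ (-μ)) := by field_simp
      _ ≤ γ * b x := mul_le_mul_of_nonneg_left (hR₀ x hx) hγ0.le
  obtain ⟨C, R₁, hexp⟩ := exists_exp_le_setIntegral_ball_of_flux hμ hk hc0 hρ.continuous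
    truncWeight_nonneg hg hg0 ⟨x₀, hgx₀⟩ hlow fun R ε hε =>
      mul_setIntegral_ball_le_of_le_mul_rdiv_add_differential hΩ hX hXk hρ truncWeight_nonneg
        (tsupport_truncWeight_subset hΩ hψc hγ) hg hg0
        (mul_truncWeight_le_mul_rdiv_add_differential hΩ hψ hψc hh hγ hmon
          (fun x => (hbpos x).le) hdiv) hε
  exact coe_le_cw_of_exp_le_setIntegral_ball hμ.2 hΩ.measurableSet hρ.continuous
    truncWeight_nonneg ofReal_truncWeight_le_indicator hexp

lemma coe_le_mul_cw_of_lt_of_forall_frontier_lt (hΩ : IsOpen Ω) (hX : IsC1FieldOn X Ω)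
    (hk : 0 < k) (hXk : ∀ x ∈ Ω, ‖X x‖ ≤ k) (hμ : μ ∈ Icc (0 : ℝ) 1) (hβ : 0 < β)
    (hb : Continuous b) (hbpos : ∀ x, 0 < b x) (hB : CondB o μ β b)
    (hψ : ContMDiffOn (𝓡 m) 𝓘(ℝ, ℝ) 1 ψ Ω) (hψc : ContinuousOn ψ (closure Ω))
    (hmon : ∀ x ∈ Ω, 0 ≤ inner ℝ (rgrad ψ x) (X x)) (hh : ContMDiffOn (𝓡 m) 𝓘(ℝ, ℝ) 1 h Ω)
    (hdiv : ∀ x ∈ Ω, b x * ψ x ≤ driftDiv h X x) (hγ : ∀ x ∈ frontier Ω, ψ x < γ) (hx₀ : x₀ ∈ Ω)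
    (hγx₀ : γ < ψ x₀) :
    (γ : EReal) ≤ ((k / β : ℝ) : EReal) * cw (rvol m M) o μ (fun x => Real.exp (-h x)) Ω := by
  have := isOpenPosMeasure_rvol (m := m) (M := M)
  set T := cw (rvol m M) o μ (fun x => Real.exp (-h x)) Ω
  have hT0 : 0 ≤ T := cw_nonneg hμ.2 hΩ ⟨x₀, hx₀⟩
    (hh.continuousOn.neg.rexp.aemeasurable hΩ.measurableSet) fun x _ => Real.exp_pos _
  have hkβ : (0 : EReal) ≤ ((k / β : ℝ) : EReal) := EReal.coe_nonneg.2 (div_pos hk hβ).le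
  rcases le_or_gt γ 0 with hγ0 | hγ0
  · exact (EReal.coe_nonpos.2 hγ0).trans (mul_nonneg hkβ hT0)
  have hT : ((γ * β / k : ℝ) : EReal) ≤ T := by
    by_contra! hlt
    obtain ⟨c, hTc, hc⟩ := EReal.lt_iff_exists_real_btwn.1 hlt
    refine hTc.not_ge (coe_le_cw_of_lt_of_forall_frontier_lt hΩ hX hk hXk hμ hb hbpos hB hψ hψc
      hmon hh hdiv hγ0 hγ hx₀ hγx₀ (EReal.coe_nonneg.1 (hT0.trans hTc.le)) ?_)
    exact (lt_div_iff₀ hk).1 (EReal.coe_lt_coe_iff.1 hc)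
  calc (γ : EReal) = ((k / β : ℝ) : EReal) * ((γ * β / k : ℝ) : EReal) := by
        rw [← EReal.coe_mul]
        congr 1
        field_simp
    _ ≤ ((k / β : ℝ) : EReal) * T := mul_le_mul_of_nonneg_left hT hkβ

end MaximumPrinciple

end RiemDrift

end

theorem stmt4_general {m : ℕ}
    {M : Type*} [MetricSpace M] [ChartedSpace (RiemDrift.Euc m) M] [IsManifold (𝓡 m) ∞ M]
    [RiemannianBundle (fun x : M => TangentSpace (𝓡 m) x)]
    [IsContMDiffRiemannianBundle (𝓡 m) ∞ (RiemDrift.Euc m) (fun x : M => TangentSpace (𝓡 m) x)]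
    [IsRiemannianManifold (𝓡 m) M]
    [CompleteSpace M]
    [MeasurableSpace M] [BorelSpace M]
    (o : M) (Ω : Set M) (hΩ : IsOpen Ω)
    (X : ∀ x : M, TangentSpace (𝓡 m) x)
    (hX : ContMDiffOn (𝓡 m) (𝓡 m).tangent 1
      (fun x => (⟨x, X x⟩ : TangentBundle (𝓡 m) M)) Ω)
    (k : ℝ) (hk : 0 < k) (hXk : ∀ x ∈ Ω, ‖X x‖ ≤ k)
    (μ β : ℝ) (hμ : μ ∈ Icc (0 : ℝ) 1) (hβ : 0 < β)
    (b : M → ℝ) (hb : Continuous b) (hbpos : ∀ x, 0 < b x) (hB : RiemDrift.CondB o μ β b)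
    (ψ : M → ℝ) (hψ : ContMDiffOn (𝓡 m) 𝓘(ℝ, ℝ) 1 ψ Ω) (hψc : ContinuousOn ψ (closure Ω))
    (hmon : ∀ x ∈ Ω, 0 ≤ inner ℝ (RiemDrift.rgrad ψ x) (X x))
    (h : M → ℝ) (hh : ContMDiffOn (𝓡 m) 𝓘(ℝ, ℝ) 1 h Ω)
    (hdiv : ∀ x ∈ Ω, b x * ψ x ≤ RiemDrift.driftDiv h X x) :
    (⨆ x ∈ Ω, (ψ x : EReal)) ≤
      max (((k / β : ℝ) : EReal) *
          RiemDrift.cw (RiemDrift.rvol m M) o μ (fun x => Real.exp (-h x)) Ω)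
        (⨆ x ∈ frontier Ω, (ψ x : EReal)) := by
  have := RiemDrift.properSpace_of_isRiemannianManifold (𝓡 m) (M := M)
  by_contra! hlt
  obtain ⟨x₀, hx₀⟩ := lt_iSup_iff.1 hlt
  obtain ⟨hx₀Ω, hx₀⟩ := lt_iSup_iff.1 hx₀
  obtain ⟨γ, hγ, hγx₀⟩ := EReal.lt_iff_exists_real_btwn.1 hx₀
  have hγfrontier : ∀ x ∈ frontier Ω, ψ x < γ := fun x hx => EReal.coe_lt_coe_iff.1
    ((le_iSup₂ (f := fun x (_ : x ∈ frontier Ω) => (ψ x : EReal)) x hx).trans_lt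
      ((le_max_right _ _).trans_lt hγ))
  exact ((le_max_left _ _).trans_lt hγ).not_ge
    (RiemDrift.coe_le_mul_cw_of_lt_of_forall_frontier_lt hΩ hX hk hXk hμ hβ hb hbpos hB hψ hψc
      hmon hh hdiv hγfrontier hx₀Ω (EReal.coe_lt_coe_iff.1 hγx₀))

theorem stmt4 {m : ℕ} (hm : 2 ≤ m)
    {M : Type*} [MetricSpace M] [ChartedSpace (RiemDrift.Euc m) M] [IsManifold (𝓡 m) ∞ M]
    [RiemannianBundle (fun x : M => TangentSpace (𝓡 m) x)]
    [IsContMDiffRiemannianBundle (𝓡 m) ∞ (RiemDrift.Euc m) (fun x : M => TangentSpace (𝓡 m) x)]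
    [IsRiemannianManifold (𝓡 m) M]
    [ConnectedSpace M] [CompleteSpace M] [NoncompactSpace M]
    [MeasurableSpace M] [BorelSpace M]
    (o : M) (Ω : Set M) (hΩ : IsOpen Ω) (hΩne : Ω.Nonempty)
    (X : ∀ x : M, TangentSpace (𝓡 m) x)
    (hX : ContMDiffOn (𝓡 m) (𝓡 m).tangent 1
      (fun x => (⟨x, X x⟩ : TangentBundle (𝓡 m) M)) Ω)
    (k : ℝ) (hk : 0 < k) (hXk : ∀ x ∈ Ω, ‖X x‖ ≤ k)
    (μ β : ℝ) (hμ : μ ∈ Icc (0 : ℝ) 1) (hβ : 0 < β)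
    (b : M → ℝ) (hb : Continuous b) (hbpos : ∀ x, 0 < b x) (hB : RiemDrift.CondB o μ β b)
    (ψ : M → ℝ) (hψ : ContMDiffOn (𝓡 m) 𝓘(ℝ, ℝ) 1 ψ Ω) (hψc : ContinuousOn ψ (closure Ω))
    (hmon : ∀ x ∈ Ω, 0 ≤ inner ℝ (RiemDrift.rgrad ψ x) (X x))
    (h : M → ℝ) (hh : ContMDiffOn (𝓡 m) 𝓘(ℝ, ℝ) 1 h Ω)
    (hdiv : ∀ x ∈ Ω, b x * ψ x ≤ RiemDrift.driftDiv h X x) :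
    (⨆ x ∈ Ω, (ψ x : EReal)) ≤
      max (((k / β : ℝ) : EReal) *
          RiemDrift.cw (RiemDrift.rvol m M) o μ (fun x => Real.exp (-h x)) Ω)
        (⨆ x ∈ frontier Ω, (ψ x : EReal)) :=
  stmt4_general o Ω hΩ X hX k hk hXk μ β hμ hβ b hb hbpos hB ψ hψ hψc hmon h hh hdiv
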